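/- arXiv:1611.09060 — 3 statements merged into one kernel-verified Lean document; each statement's English description precedes it below -/
import Mathlib

section
/- Let H be a finite simple graph with tree-depth exactly 3 such that at most one connected component of H has tree-depth 3. Then there exists an integer d such that every finite simple graph with no H minor is (2, d)-colourable; moreover, for every integer d there exists a finite simple graph with no H minor that is not (1, d)-colourable. In other words, the defective chromatic number of the class of H-minor-free graphs equals 2. -/
/-!
Upper bound. A graph `H` as in the statement with `n` vertices is a subgraph of `Hlk n n`: deleting
the root of the component of tree-depth 3 leaves a forest of stars. So it suffices to 2-colour
graphs `G` without `Hlk l k` minor with bounded defect.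

Such graphs have bounded density, by contracting a maximal connected set along which the density
does not drop. The colouring is found by a reduction on a minor `G'` of `G` whose vertices stand for
*clumps*: vertex sets that will be monochromatic. Initially `G' = G` and the clumps are single
vertices. Isolated vertices of `G'` and edges of `G'` between two vertices of low degree may be
deleted. If neither exists, then sparsity of the minors of `G` yields many low degree vertices of
`G'` with exactly the same small neighbourhood `S`. The clumps in `S` are merged into one, and all
these low degree vertices are deleted; they will receive the colour opposite to that of the merged
clump, so none of their edges of `G'` is monochromatic.

It remains to see that a vertex `x` has few neighbours in a clump, so that a bounded number of
adjacent clumps causes a bounded defect. Any two parts merged into a clump are joined by many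
disjoint connected sets, namely deleted low degree vertices. If `x` had more than `2 * l` neighbours
in the clump, the clump would decompose into more than `2 * l` connected blocks, each containing a
neighbour of `x`, on two sides, such that each block has `k + 1` private connected sets joining it
to blocks of the other side. Taking `l` blocks on the same side as star centres, and `x` with all
blocks of the other side as dominant vertex, gives an `Hlk l k` minor.

Lower bound. Minors of stars have tree-depth at most 2, whereas the star with `d + 1` leaves is not
`(1, d)`-colourable.
-/

open SimpleGraph

universe u v

section Defs

variable {V : Type u} {α : Type v}

/-- `H` is isomorphic to a subgraph of `G`: there is an injective graph homomorphism. -/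
def ContainsSubgraph (G : SimpleGraph V) (H : SimpleGraph α) : Prop :=
  ∃ f : H →g G, Function.Injective f

/-- `G` is `(k,d)`-choosable: for every assignment of lists of exactly `k` colours there is a
colouring from the lists in which every vertex has at most `d` neighbours of its own colour. -/
def Choosable (G : SimpleGraph V) (k : ℕ) (d : ℤ) : Prop :=
  ∀ L : V → Finset ℕ, (∀ v, (L v).card = k) →
    ∃ c : V → ℕ, (∀ v, c v ∈ L v) ∧
      ∀ v, (({w | G.Adj v w ∧ c w = c v}.ncard : ℤ)) ≤ d

/-- `G` is `(k,d)`-colourable: the vertices can be `k`-coloured with every vertex having at most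
`d` neighbours of its own colour. -/
def DefColorable (G : SimpleGraph V) (k d : ℕ) : Prop :=
  ∃ c : V → Fin k, ∀ v, {w | G.Adj v w ∧ c w = c v}.ncard ≤ d

/-- `H` is a minor of `G`, via pairwise disjoint connected branch sets. -/
def IsMinor (H : SimpleGraph α) (G : SimpleGraph V) : Prop :=
  ∃ B : α → Set V,
    (∀ a, (B a).Nonempty) ∧
    (∀ a, (G.induce (B a)).Connected) ∧
    (Pairwise fun a b => Disjoint (B a) (B b)) ∧
    (∀ a b, H.Adj a b → ∃ x ∈ B a, ∃ y ∈ B b, G.Adj x y)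

/-- A subdivision of `H` whose path lengths all satisfy `lenOK` occurs as a subgraph of `G`:
the branch vertices are embedded injectively by `f`, each edge of `H` is replaced by a path of
`G` between the corresponding branch vertices, internal vertices of these paths avoid branch
vertices, and distinct paths meet only in common endpoints. -/
def HasSubdivWith (G : SimpleGraph V) (H : SimpleGraph α) (lenOK : ℕ → Prop) : Prop :=
  ∃ f : α → V, Function.Injective f ∧
    ∃ P : ∀ ⦃a b : α⦄, H.Adj a b → G.Walk (f a) (f b),
      (∀ ⦃a b⦄ (h : H.Adj a b), (P h).IsPath ∧ lenOK (P h).length) ∧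
      (∀ ⦃a b⦄ (h : H.Adj a b) (c : α), f c ∈ (P h).support → c = a ∨ c = b) ∧
      (∀ ⦃a b⦄ (h : H.Adj a b) ⦃a' b'⦄ (h' : H.Adj a' b'), s(a, b) ≠ s(a', b') →
        ∀ x ∈ (P h).support, x ∈ (P h').support →
          (x = f a ∨ x = f b) ∧ (x = f a' ∨ x = f b'))

/-- Some `(≤ k)`-subdivision of `H` (each edge replaced by a path of length at most `k+1`)
is a subgraph of `G`. -/
def HasSubdivLE (G : SimpleGraph V) (k : ℕ) (H : SimpleGraph α) : Prop :=
  HasSubdivWith G H fun L => L ≤ k + 1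

/-- `H` is a topological minor of `G`: some subdivision of `H` is a subgraph of `G`. -/
def HasTopMinor (G : SimpleGraph V) (H : SimpleGraph α) : Prop :=
  HasSubdivWith G H fun _ => True

/-- The exact `1`-subdivision of `H`: every edge is subdivided exactly once. -/
def exactOneSubdivision (H : SimpleGraph α) : SimpleGraph (α ⊕ H.edgeSet) :=
  SimpleGraph.fromRel fun x y =>
    match x, y with
    | Sum.inl a, Sum.inr e => a ∈ (e : Sym2 α)
    | _, _ => False

/-- The graph `K*_{s,t}`: `K_{s,t}` together with `binom s 2` new vertices, each adjacent to a
distinct pair of vertices on the side of size `s`. -/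
def KstarGraph (s t : ℕ) :
    SimpleGraph (Fin s ⊕ (Fin t ⊕ {p : Fin s × Fin s // p.1 < p.2})) :=
  SimpleGraph.fromRel fun x y =>
    match x, y with
    | Sum.inl _, Sum.inr (Sum.inl _) => True
    | Sum.inl a, Sum.inr (Sum.inr c) => a = c.1.1 ∨ a = c.1.2
    | _, _ => False

/-- The auxiliary function `N₁(s,t,δ,δ₁)`. -/
noncomputable def N1 (s t : ℕ) (δ δ₁ : ℝ) : ℝ :=
  if s = 1 then (t : ℝ) - 1
  else if s = 2 then (δ - 2) * δ₁ * t / 2 + δ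
  else (δ - s) * ((Nat.choose ⌊δ₁⌋₊ (s - 1) : ℝ) * ((t : ℝ) - 1) + δ₁ / 2) + δ

/-- The maximum average degree of `G`: maximum of `2|E(H)|/|V(H)|` over nonempty subgraphs. -/
noncomputable def mad [Fintype V] (G : SimpleGraph V) : ℝ :=
  sSup {q : ℝ | ∃ H : G.Subgraph, H.verts.Nonempty ∧
    q = 2 * (H.edgeSet.ncard : ℝ) / (H.verts.ncard : ℝ)}

/-- `∇₀(G)`: maximum of `|E(H)|/|V(H)|` over nonempty subgraphs of `G`. -/
noncomputable def nabla0 [Fintype V] (G : SimpleGraph V) : ℝ :=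
  sSup {q : ℝ | ∃ H : G.Subgraph, H.verts.Nonempty ∧
    q = (H.edgeSet.ncard : ℝ) / (H.verts.ncard : ℝ)}

/-- `∇₁(G)`: maximum of `|E(H)|/|V(H)|` over graphs `H` some `(≤2)`-subdivision of which is a
subgraph of `G`. -/
noncomputable def nabla1 [Fintype V] (G : SimpleGraph V) : ℝ :=
  sSup {q : ℝ | ∃ (n : ℕ) (H : SimpleGraph (Fin n)), 0 < n ∧
    HasSubdivLE G 2 H ∧ q = (H.edgeSet.ncard : ℝ) / (n : ℝ)}

end Defs

/-- The vertex type of the graph `G(s,N)` (here indexed by `t = s - 2`). -/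
def GVert : ℕ → ℕ → Type
  | 0, N => Fin (N + 2)
  | t + 1, N => Option (Fin (N + 1) × GVert t N)

/-- The graph `G(s,N)` (indexed by `t = s - 2`): `GGraph 0 N = G(2,N) = K_{1,N+1}`, and
`GGraph (t+1) N = G(t+3,N)` is obtained from `N+1` disjoint copies of `GGraph t N` by adding
a dominant vertex. -/
def GGraph : (t : ℕ) → (N : ℕ) → SimpleGraph (GVert t N)
  | 0, N => SimpleGraph.fromRel fun i j => i = (0 : Fin (N + 2))
  | t + 1, N => SimpleGraph.fromRel fun x y =>
      match x, y with
      | none, some _ => True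
      | some (i, a), some (j, b) => i = j ∧ (GGraph t N).Adj a b
      | _, _ => False

section More

variable {V : Type u} {α : Type v}

/-- `r` is a forest order witnessing that `H` is a subgraph of the closure of a rooted forest:
`r` is a partial order in which the set of ancestors of each vertex is a chain, and adjacent
vertices of `H` are comparable. -/
def IsForestOrder (H : SimpleGraph α) (r : α → α → Prop) : Prop :=
  IsPartialOrder α r ∧ (∀ v : α, IsChain r {u | r u v}) ∧
    (∀ x y, H.Adj x y → r x y ∨ r y x)

/-- The tree-depth of `H`: the minimum height of a rooted forest whose closure contains `H`
as a subgraph (the height being measured as the maximum number of vertices on a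
root--to--leaf path). -/
noncomputable def treeDepth (H : SimpleGraph α) : ℕ :=
  sInf {k | ∃ r : α → α → Prop, IsForestOrder H r ∧ ∀ v, {u | r u v}.ncard ≤ k}

/-- The vertex cover number `τ(H)`. -/
noncomputable def vertexCoverNumber (H : SimpleGraph α) : ℕ :=
  sInf {k | ∃ S : Set α, S.ncard = k ∧ ∀ ⦃x y⦄, H.Adj x y → x ∈ S ∨ y ∈ S}

/-- The graph obtained from `ℓ` disjoint copies of the star `K_{1,k}` by adding one dominant
vertex. -/
def Hlk (l k : ℕ) : SimpleGraph (Option (Fin l × Fin (k + 1))) :=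
  SimpleGraph.fromRel fun x y =>
    match x, y with
    | none, some _ => True
    | some (i, a), some (j, _) => i = j ∧ a = 0
    | _, _ => False

/-- The star `K_{1,k}` together with `m` isolated vertices. -/
def StarPlusIsolated (k m : ℕ) : SimpleGraph (Fin (k + 1) ⊕ Fin m) :=
  SimpleGraph.fromRel fun x y =>
    match x, y with
    | Sum.inl i, Sum.inl _ => i = 0
    | _, _ => False

/-- `G` admits a `k`-stack layout: a linear ordering of the vertices (given by an injection
into `ℕ`) and an assignment of the edges to `k` stacks so that no two edges in a common stack
cross. -/
def HasStackLayout (G : SimpleGraph V) (k : ℕ) : Prop :=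
  ∃ f : V → ℕ, Function.Injective f ∧
    ∃ σ : Sym2 V → Fin k,
      ∀ a b c d : V, G.Adj a b → G.Adj c d → σ s(a, b) = σ s(c, d) →
        ¬(f a < f c ∧ f c < f b ∧ f b < f d)

/-- `G` admits a `k`-queue layout: a linear ordering of the vertices (given by an injection
into `ℕ`) and an assignment of the edges to `k` queues so that no two edges in a common queue
are nested. -/
def HasQueueLayout (G : SimpleGraph V) (k : ℕ) : Prop :=
  ∃ f : V → ℕ, Function.Injective f ∧
    ∃ σ : Sym2 V → Fin k,
      ∀ a b c d : V, G.Adj a b → G.Adj c d → σ s(a, b) = σ s(c, d) →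
        ¬(f a < f c ∧ f c < f d ∧ f d < f b)

end More

/-! ### Connected sets, touching sets and minors -/

/-- The vertex set `s` induces a connected, hence nonempty, subgraph of `G`. Branch sets of minors
are such sets. -/
def ConnectedSet {V : Type*} (G : SimpleGraph V) (s : Set V) : Prop := (G.induce s).Connected

/-- Some edge of `G` joins a vertex of `s` to a vertex of `t`. -/
def Touch {V : Type*} (G : SimpleGraph V) (s t : Set V) : Prop := ∃ x ∈ s, ∃ y ∈ t, G.Adj x y

section Basics

variable {V : Type*} {G : SimpleGraph V} {s t s' t' : Set V}

lemma Touch.symm (h : Touch G s t) : Touch G t s := by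
  obtain ⟨x, hx, y, hy, h⟩ := h
  exact ⟨y, hy, x, hx, h.symm⟩

lemma Touch.mono (h : Touch G s t) (hs : s ⊆ s') (ht : t ⊆ t') : Touch G s' t' := by
  obtain ⟨x, hx, y, hy, h⟩ := h
  exact ⟨x, hs hx, y, ht hy, h⟩

lemma ConnectedSet.nonempty (h : ConnectedSet G s) : s.Nonempty :=
  Set.nonempty_coe_sort.1 (Connected.nonempty h)

lemma connectedSet_singleton (v : V) : ConnectedSet G {v} := by
  rw [ConnectedSet, SimpleGraph.induce_singleton_eq_top]
  exact connected_top

lemma ConnectedSet.union (hs : ConnectedSet G s) (ht : ConnectedSet G t) (h : Touch G s t) :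
    ConnectedSet G (s ∪ t) := by
  obtain ⟨x, hx, y, hy, h⟩ := h
  exact connected_induce_union hs.preconnected ht.preconnected hx hy h

lemma connectedSet_of_forall_mem (u : V) (hu : u ∈ s)
    (h : ∀ v ∈ s, ∃ s' ⊆ s, ConnectedSet G s' ∧ u ∈ s' ∧ v ∈ s') : ConnectedSet G s := by
  refine induce_connected_of_patches u hu fun {v} hv => ?_
  obtain ⟨s', hs', hconn, hu', hv'⟩ := h v hv
  exact ⟨s', hs', hu', hv', hconn.preconnected _ _⟩

lemma ConnectedSet.union_biUnion {ι : Type*} (ht : ConnectedSet G t) {I : Set ι} {B : ι → Set V}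
    (hB : ∀ i ∈ I, ConnectedSet G (B i)) (htouch : ∀ i ∈ I, Touch G t (B i)) :
    ConnectedSet G (t ∪ ⋃ i ∈ I, B i) := by
  obtain ⟨u, hu⟩ := ht.nonempty
  refine connectedSet_of_forall_mem u (Or.inl hu) fun v hv => ?_
  rcases hv with hv | hv
  · exact ⟨t, Set.subset_union_left, ht, hu, hv⟩
  · obtain ⟨i, hi, hv⟩ := Set.mem_iUnion₂.1 hv
    exact ⟨t ∪ B i, Set.union_subset_union_right _ (Set.subset_biUnion_of_mem hi),
      ht.union (hB i hi) (htouch i hi), Or.inl hu, Or.inr hv⟩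

lemma connectedSet_union_of_forall_adj (hs : s.Nonempty) (ht : t.Nonempty)
    (hadj : ∀ x ∈ t, ∀ y ∈ s, G.Adj x y) : ConnectedSet G (s ∪ t) := by
  obtain ⟨y, hy⟩ := hs
  obtain ⟨x, hx⟩ := ht
  have hstar : ConnectedSet G ({y} ∪ ⋃ x ∈ t, {x}) :=
    (connectedSet_singleton y).union_biUnion (fun x _ => connectedSet_singleton x)
      fun x hx => ⟨y, rfl, x, rfl, (hadj x hx y hy).symm⟩
  rw [Set.biUnion_of_singleton] at hstar
  have := hstar.union_biUnion (fun y (_ : y ∈ s) => connectedSet_singleton y)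
    fun y hy => ⟨x, Or.inr hx, y, rfl, hadj x hx y hy⟩
  rwa [Set.biUnion_of_singleton, Set.union_right_comm,
    Set.union_eq_self_of_subset_left (Set.singleton_subset_iff.2 hy)] at this

lemma ConnectedSet.biUnion {α : Type*} {H : SimpleGraph α} {S : Set α} (hS : ConnectedSet H S)
    {B : α → Set V} (hB : ∀ a ∈ S, ConnectedSet G (B a))
    (htouch : ∀ a ∈ S, ∀ b ∈ S, H.Adj a b → Touch G (B a) (B b)) :
    ConnectedSet G (⋃ a ∈ S, B a) := by
  have along_walk (x y : S) (w : (H.induce S).Walk x y) :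
      ∃ s' ⊆ ⋃ a ∈ S, B a, ConnectedSet G s' ∧ B x ⊆ s' ∧ B y ⊆ s' := by
    induction w with
    | @nil x =>
      exact ⟨B x, Set.subset_biUnion_of_mem x.2, hB x x.2, subset_rfl, subset_rfl⟩
    | @cons x y z h _ ih =>
      obtain ⟨s', hs', hconn, hy, hz⟩ := ih
      exact ⟨B x ∪ s', Set.union_subset (Set.subset_biUnion_of_mem x.2) hs',
        (hB x x.2).union hconn ((htouch x x.2 y y.2 h).mono subset_rfl hy),
        Set.subset_union_left, hz.trans Set.subset_union_right⟩
  obtain ⟨a, ha⟩ := hS.nonempty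
  obtain ⟨u, hu⟩ := (hB a ha).nonempty
  refine connectedSet_of_forall_mem u (Set.mem_biUnion ha hu) fun v hv => ?_
  obtain ⟨b, hb, hv⟩ := Set.mem_iUnion₂.1 hv
  obtain ⟨w⟩ := hS.preconnected ⟨a, ha⟩ ⟨b, hb⟩
  obtain ⟨s', hs', hconn, ha', hb'⟩ := along_walk _ _ w
  exact ⟨s', hs', hconn, ha' hu, hb' hv⟩

lemma IsMinor.of_connectedSet {α : Type*} {H : SimpleGraph α} (B : α → Set V)
    (hB : ∀ a, ConnectedSet G (B a)) (hdisj : Pairwise fun a b => Disjoint (B a) (B b))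
    (htouch : ∀ a b, H.Adj a b → Touch G (B a) (B b)) : IsMinor H G :=
  ⟨B, fun a => (hB a).nonempty, hB, hdisj, htouch⟩

lemma IsMinor.trans {α β : Type*} {A : SimpleGraph α} {B : SimpleGraph β}
    (hAB : IsMinor A B) (hBG : IsMinor B G) : IsMinor A G := by
  obtain ⟨S, -, hS, hSdisj, hStouch⟩ := hAB
  obtain ⟨T, -, hT, hTdisj, hTtouch⟩ := hBG
  refine .of_connectedSet (fun a => ⋃ b ∈ S a, T b)
    (fun a => ConnectedSet.biUnion (hS a) (fun b _ => hT b) fun b _ b' _ => hTtouch b b') ?_ ?_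
  · intro a a' haa'
    simp only [Set.disjoint_iUnion_left, Set.disjoint_iUnion_right]
    intro b hb b' hb'
    exact hTdisj ((hSdisj haa').ne_of_mem hb' hb)
  · intro a a' h
    obtain ⟨b, hb, b', hb', h⟩ := hStouch a a' h
    exact Touch.mono (hTtouch b b' h) (Set.subset_biUnion_of_mem hb) (Set.subset_biUnion_of_mem hb')

lemma IsMinor.of_injective {α : Type*} {A : SimpleGraph α} (f : A →g G)
    (hf : Function.Injective f) : IsMinor A G :=
  .of_connectedSet (fun a => {f a}) (fun _ => connectedSet_singleton _)
    (fun _ _ hab => Set.disjoint_singleton.2 (hf.ne hab))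
    fun _ _ hab => ⟨_, rfl, _, rfl, f.map_adj hab⟩

end Basics

/-! ### Leaf families -/

/-- Within the territory `U`, each set `T i` of a family has its own sets `L i j`, which are
connected, disjoint from each other and from all the sets `T i'`, and each of which joins `T i` to
the target `R i`. After contracting `T i` and its `L i j` into a star, the leaves of the star keep
a neighbour in the target. -/
structure IsLeafFamily {V ι β : Type*} (G : SimpleGraph V) (U : Set V) (T R : ι → Set V)
    (L : ι → β → Set V) : Prop where
  conn : ∀ i j, ConnectedSet G (L i j)
  subset : ∀ i j, L i j ⊆ U
  disj : ∀ i j i' j', (i, j) ≠ (i', j') → Disjoint (L i j) (L i' j')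
  disj_block : ∀ i j i', Disjoint (L i j) (T i')
  touch_block : ∀ i j, Touch G (L i j) (T i)
  touch_target : ∀ i j, Touch G (L i j) (R i)

namespace IsLeafFamily

variable {V ι ι' β β' : Type*} {G : SimpleGraph V} {U U' : Set V} {T R : ι → Set V}
  {L : ι → β → Set V}

lemma reindex (h : IsLeafFamily G U T R L) {e : ι' → ι} (he : Function.Injective e)
    {g : ι' → β' → β} (hg : ∀ i, Function.Injective (g i)) (hU : U ⊆ U') {R' : ι' → Set V}
    (hR : ∀ i, R (e i) ⊆ R' i) :
    IsLeafFamily G U' (T ∘ e) R' fun i j => L (e i) (g i j) where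
  conn _ _ := h.conn _ _
  subset _ _ := (h.subset _ _).trans hU
  disj i j i' j' hne := by
    refine h.disj _ _ _ _ fun heq => hne ?_
    obtain rfl := he (congrArg Prod.fst heq)
    exact congrArg (i, ·) (hg i (congrArg Prod.snd heq))
  disj_block _ _ _ := h.disj_block _ _ _
  touch_block _ _ := h.touch_block _ _
  touch_target i _ := (h.touch_target _ _).mono subset_rfl (hR i)

lemma sum {T' R' : ι' → Set V} {L' : ι' → β → Set V} (h : IsLeafFamily G U T R L)
    (h' : IsLeafFamily G U' T' R' L') (hU : Disjoint U U') (hT : ∀ i, T i ⊆ U)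
    (hT' : ∀ i, T' i ⊆ U') :
    IsLeafFamily G (U ∪ U') (Sum.elim T T') (Sum.elim R R') (Sum.elim L L') where
  conn := Sum.rec h.conn h'.conn
  subset := Sum.rec (fun i j => Set.subset_union_of_subset_left (h.subset i j) _)
    fun i j => Set.subset_union_of_subset_right (h'.subset i j) _
  disj := by
    rintro (i | i) j (i' | i') j' hne
    · exact h.disj _ _ _ _ fun heq => hne (by cases heq; rfl)
    · exact hU.mono (h.subset _ _) (h'.subset _ _)
    · exact hU.symm.mono (h'.subset _ _) (h.subset _ _)
    · exact h'.disj _ _ _ _ fun heq => hne (by cases heq; rfl)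
  disj_block := by
    rintro (i | i) j (i' | i')
    · exact h.disj_block _ _ _
    · exact hU.mono (h.subset _ _) (hT' _)
    · exact hU.symm.mono (h'.subset _ _) (hT _)
    · exact h'.disj_block _ _ _
  touch_block := Sum.rec h.touch_block h'.touch_block
  touch_target := Sum.rec h.touch_target h'.touch_target

end IsLeafFamily

lemma Hlk_adj_none_some {l k : ℕ} (p : Fin l × Fin (k + 1)) : (Hlk l k).Adj none (some p) := by
  simp [Hlk]

lemma Hlk_adj_some_some {l k : ℕ} {i j : Fin l} {a b : Fin (k + 1)} :
    (Hlk l k).Adj (some (i, a)) (some (j, b)) ↔ i = j ∧ (a = 0 ∧ b ≠ 0 ∨ a ≠ 0 ∧ b = 0) := by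
  simp only [Hlk, fromRel_adj, ne_eq, Option.some.injEq, Prod.mk.injEq]
  grind

lemma isMinor_Hlk_of_isLeafFamily {V : Type*} {G : SimpleGraph V} {l k : ℕ} {U X : Set V}
    {C : Fin l → Set V} {L : Fin l → Fin k → Set V} (hX : ConnectedSet G X)
    (hC : ∀ i, ConnectedSet G (C i)) (hCdisj : Pairwise fun i j => Disjoint (C i) (C j))
    (hXC : ∀ i, Disjoint X (C i)) (hXCtouch : ∀ i, Touch G X (C i))
    (hL : IsLeafFamily G U C (fun _ => X) L) (hXL : ∀ i j, Disjoint X (L i j)) :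
    IsMinor (Hlk l k) G := by
  let S (i : Fin l) : Fin (k + 1) → Set V := Fin.cons (C i) (L i)
  have hS (i a) : ConnectedSet G (S i a) := Fin.cases (hC i) (hL.conn i) a
  have hXS (i a) : Disjoint X (S i a) := Fin.cases (hXC i) (hXL i) a
  have hXStouch (i a) : Touch G X (S i a) :=
    Fin.cases (hXCtouch i) (fun j => (hL.touch_target i j).symm) a
  have hSdisj (i a j b) (h : (i, a) ≠ (j, b)) : Disjoint (S i a) (S j b) := by
    cases a using Fin.cases with
    | zero =>
      cases b using Fin.cases with
      | zero => exact hCdisj fun hij => h (by rw [hij])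
      | succ b => exact (hL.disj_block _ _ _).symm
    | succ a =>
      cases b using Fin.cases with
      | zero => exact hL.disj_block _ _ _
      | succ b =>
        refine hL.disj i a j b fun heq => h ?_
        rw [(Prod.mk.inj heq).1, (Prod.mk.inj heq).2]
  have hStouch (i a) (ha : a ≠ 0) : Touch G (S i 0) (S i a) := by
    obtain ⟨j, rfl⟩ := Fin.exists_succ_eq.2 ha
    exact (hL.touch_block i j).symm
  refine .of_connectedSet (fun a => a.elim X fun p => S p.1 p.2) ?_ ?_ ?_
  · rintro (_ | ⟨i, a⟩)
    · exact hX
    · exact hS i a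
  · rintro (_ | ⟨i, a⟩) (_ | ⟨j, b⟩) h
    · exact absurd rfl h
    · exact hXS j b
    · exact (hXS i a).symm
    · exact hSdisj i a j b fun h' => h (congrArg some h')
  · rintro (_ | ⟨i, a⟩) (_ | ⟨j, b⟩) h
    · exact absurd h (SimpleGraph.irrefl _)
    · exact hXStouch j b
    · exact (hXStouch i a).symm
    · obtain ⟨rfl, ⟨rfl, hb⟩ | ⟨ha, rfl⟩⟩ := Hlk_adj_some_some.1 h
      · exact hStouch i b hb
      · exact (hStouch i a ha).symm

/-! ### Stars have no minor of tree-depth 3 -/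

lemma treeDepth_le_two_of_isVertexCover {α : Type*} {H : SimpleGraph α} {S : Set α}
    (hS : S.Subsingleton) (hcover : H.IsVertexCover S) : treeDepth H ≤ 2 := by
  -- The only vertex of the cover is the root, all other vertices are its children.
  refine Nat.sInf_le ⟨fun u v => u = v ∨ u ∈ S, ⟨?_, ?_, ?_⟩, ?_⟩
  · refine { refl := fun a => Or.inl rfl, trans := ?_, antisymm := ?_ }
    · rintro a b c (rfl | ha) (rfl | hb)
      exacts [Or.inl rfl, Or.inr hb, Or.inr ha, Or.inr ha]
    · rintro a b (rfl | ha) (hba | hb)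
      exacts [rfl, rfl, hba.symm, hS ha hb]
  · rintro v a (rfl | ha) b (rfl | hb) hab
    exacts [absurd rfl hab, Or.inr (Or.inr hb), Or.inl (Or.inr ha), absurd (hS ha hb) hab]
  · exact fun x y hxy => (hcover hxy).imp Or.inr Or.inr
  · intro v
    change (insert v S).ncard ≤ 2
    have : S.ncard ≤ 1 := (Set.ncard_le_one hS.finite).2 fun _ ha _ hb => hS ha hb
    exact (Set.ncard_insert_le v S).trans (by lia)

lemma treeDepth_le_two_of_isMinor_starGraph {α V : Type*} {H : SimpleGraph α} {z : V}
    (h : IsMinor H (starGraph z)) : treeDepth H ≤ 2 := by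
  obtain ⟨B, -, -, hdisj, htouch⟩ := h
  refine treeDepth_le_two_of_isVertexCover (S := {a | z ∈ B a}) ?_ ?_
  · intro a ha b hb
    by_contra hab
    exact Set.disjoint_left.1 (hdisj hab) ha hb
  · intro a b hab
    obtain ⟨x, hx, y, hy, hxy⟩ := htouch a b hab
    obtain ⟨-, rfl | rfl⟩ := starGraph_adj.1 hxy
    exacts [Or.inl hx, Or.inr hy]

lemma DefColorable.ncard_neighborSet_le {V : Type*} {G : SimpleGraph V} {d : ℕ}
    (h : DefColorable G 1 d) (v : V) : (G.neighborSet v).ncard ≤ d := by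
  obtain ⟨c, hc⟩ := h
  convert hc v using 2
  ext w
  simp [Subsingleton.elim (c w) (c v)]

lemma not_defColorable_one_starGraph {V : Type*} [Finite V] {d : ℕ} (z : V)
    (hd : d + 1 < Nat.card V) : ¬ DefColorable (starGraph z) 1 d := by
  intro h
  have hcompl : (starGraph z).neighborSet z = {z}ᶜ := by
    ext w
    simp [eq_comm]
  have hle := h.ncard_neighborSet_le z
  have hadd := Set.ncard_add_ncard_compl {z}
  rw [Set.ncard_singleton] at hadd
  rw [hcompl] at hle
  lia

lemma exists_not_isMinor_not_defColorable_one {α : Type*} {H : SimpleGraph α}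
    (h : 2 < treeDepth H) (d : ℕ) :
    ∃ (W : Type) (_ : Fintype W) (G : SimpleGraph W), ¬ IsMinor H G ∧ ¬ DefColorable G 1 d :=
  ⟨Fin (d + 2), inferInstance, starGraph 0,
    fun hminor => (treeDepth_le_two_of_isMinor_starGraph hminor).not_gt h,
    not_defColorable_one_starGraph 0 (by simp)⟩

/-! ### Graphs with at most one component of tree-depth 3 are subgraphs of some `Hlk l k` -/

section TreeDepth

variable {α : Type*} {H : SimpleGraph α} {r : α → α → Prop}

lemma treeDepth_le {k : ℕ} (hr : IsForestOrder H r) (hk : ∀ v, {u | r u v}.ncard ≤ k) :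
    treeDepth H ≤ k :=
  Nat.sInf_le ⟨r, hr, hk⟩

lemma exists_isForestOrder_ncard_le_treeDepth [Finite α] (H : SimpleGraph α) :
    ∃ r, IsForestOrder H r ∧ ∀ v, {u | r u v}.ncard ≤ treeDepth H := by
  obtain ⟨n, ⟨e⟩⟩ := Finite.exists_equiv_fin α
  let := LinearOrder.lift' e e.injective
  exact Nat.sInf_mem (s := {k | ∃ r, IsForestOrder H r ∧ ∀ v, {u | r u v}.ncard ≤ k})
    ⟨Nat.card α, (· ≤ ·), ⟨inferInstance, fun _ _ _ _ _ _ => le_total _ _,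
      fun _ _ _ => le_total _ _⟩, fun _ => Set.ncard_le_card _⟩

lemma IsForestOrder.induce (hr : IsForestOrder H r) (s : Set α) :
    IsForestOrder (H.induce s) fun a b => r a b := by
  obtain ⟨hpo, hchain, hadj⟩ := hr
  exact ⟨(Subrel.relEmbedding r (· ∈ s)).isPartialOrder,
    fun v a ha b hb hab => hchain v ha hb (Subtype.coe_injective.ne hab), fun x y => hadj x y⟩

lemma treeDepth_induce_le [Finite α] (H : SimpleGraph α) (s : Set α) :
    treeDepth (H.induce s) ≤ treeDepth H := by
  obtain ⟨r, hr, hle⟩ := exists_isForestOrder_ncard_le_treeDepth H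
  refine treeDepth_le (hr.induce s) fun v => ?_
  rw [← Set.ncard_image_of_injective _ Subtype.val_injective]
  exact (Set.ncard_le_ncard (Set.image_subset_iff.2 fun u hu => hu)).trans (hle v)

lemma IsForestOrder.exists_root [Finite α] (hr : IsForestOrder H r) (hH : H.Connected) :
    ∃ ρ, ∀ v, r ρ v := by
  obtain ⟨hpo, hchain, hadj⟩ := hr
  let : PartialOrder α :=
    { le := r, le_refl := hpo.refl, le_trans := hpo.trans, le_antisymm := hpo.antisymm }
  have exists_isMin_le (v : α) : ∃ m ≤ v, IsMin m := by
    obtain ⟨m, hm, hmin⟩ := exists_minimal_le_of_wellFoundedLT (fun _ => True) v trivial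
    exact ⟨m, hm, minimal_true.1 hmin⟩
  have isMin_unique {a b v : α} (ha : IsMin a) (hb : IsMin b) (hav : a ≤ v) (hbv : b ≤ v) :
      a = b := by
    by_contra hab
    exact (hchain v hav hbv hab).elim (fun h => hab (hb.eq_of_le h)) fun h => hab (ha.eq_of_ge h)
  choose m hm hmin using exists_isMin_le
  have m_eq_of_adj {x y} (h : H.Adj x y) : m x = m y :=
    (hadj x y h).elim (fun h => isMin_unique (hmin x) (hmin y) ((hm x).trans h) (hm y))
      fun h => isMin_unique (hmin x) (hmin y) (hm x) ((hm y).trans h)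
  obtain ⟨v₀⟩ := hH.nonempty
  refine ⟨m v₀, fun v => ?_⟩
  obtain ⟨w⟩ := hH.preconnected v₀ v
  have : m v₀ = m v := by
    induction w with
    | nil => rfl
    | cons h _ ih => exact (m_eq_of_adj h).trans ih
  exact this ▸ hm v

end TreeDepth

/-- Outside `X`, the graph `H` is a forest of stars, and `p` maps each vertex to the centre of its
star. -/
def IsStarMap {α : Type*} (H : SimpleGraph α) (X : Set α) (p : α → α) : Prop :=
  ∀ u v, H.Adj u v → u ∉ X → v ∉ X → p u = p v ∧ (u = p u ∨ v = p v)

section StarMap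

variable {α : Type*} {H : SimpleGraph α}

lemma IsForestOrder.exists_isStarMap [Finite α] {r : α → α → Prop} (hr : IsForestOrder H r)
    {X : Set α} (hX : ∀ v ∉ X, ({u | r u v} \ X).ncard ≤ 2) : ∃ p, IsStarMap H X p := by
  classical
  obtain ⟨hpo, -, hadj⟩ := hr
  have ancestor_unique {v a b} (hv : v ∉ X) (ha : a ∉ X) (hb : b ∉ X) (hav : r a v) (hbv : r b v)
      (hane : a ≠ v) (hbne : b ≠ v) : a = b := by
    by_contra hab
    have hsub : {a, b, v} ⊆ {u | r u v} \ X := by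
      rintro u (rfl | rfl | rfl)
      exacts [⟨hav, ha⟩, ⟨hbv, hb⟩, ⟨hpo.refl _, hv⟩]
    have := Set.ncard_le_ncard hsub
    rw [Set.ncard_eq_three.2 ⟨a, b, v, hab, hane, hbne, rfl⟩] at this
    exact absurd (hX v hv) (by lia)
  let p v := if h : ∃ u, u ∉ X ∧ r u v ∧ u ≠ v then h.choose else v
  have parent {u v} (hu : u ∉ X) (hv : v ∉ X) (huv : r u v) (hne : u ≠ v) : p v = u ∧ p u = u := by
    constructor
    · have hex : ∃ u, u ∉ X ∧ r u v ∧ u ≠ v := ⟨u, hu, huv, hne⟩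
      obtain ⟨hX', hr', hne'⟩ := hex.choose_spec
      simp only [p, dif_pos hex]
      exact ancestor_unique hv hX' hu hr' huv hne' hne
    · refine dif_neg ?_
      rintro ⟨w, hw, hwu, hwne⟩
      refine hwne (ancestor_unique hv hw hu (hpo.trans _ _ _ hwu huv) huv ?_ hne)
      rintro rfl
      exact hne (hpo.antisymm _ _ huv hwu)
  refine ⟨p, fun u v huv hu hv => ?_⟩
  rcases hadj u v huv with h | h
  · obtain ⟨hpv, hpu⟩ := parent hu hv h huv.ne
    exact ⟨hpu.trans hpv.symm, Or.inl hpu.symm⟩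
  · obtain ⟨hpu, hpv⟩ := parent hv hu h huv.ne'
    exact ⟨hpu.trans hpv.symm, Or.inr hpv.symm⟩

lemma IsStarMap.spanningCoe {s : Set α} {J : SimpleGraph s} {X : Set s} {p : s → s}
    (h : IsStarMap J X p) :
    IsStarMap J.spanningCoe (Subtype.val '' X) (Function.extend Subtype.val (fun v => p v) id) := by
  rintro _ _ ⟨-, u, v, huv, rfl, rfl⟩ hu hv
  have hp (v : s) : Function.extend Subtype.val (fun v => (p v : α)) id v = p v :=
    Subtype.val_injective.extend_apply _ _ _
  obtain ⟨heq, hor⟩ := h u v huv (fun hX => hu ⟨u, hX, rfl⟩) fun hX => hv ⟨v, hX, rfl⟩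
  rw [Function.Embedding.subtype_apply, Function.Embedding.subtype_apply, hp, hp]
  exact ⟨congrArg _ heq, hor.imp (congrArg _) (congrArg _)⟩

lemma isStarMap_iUnion_connectedComponent {X : H.ConnectedComponent → Set α}
    {p : H.ConnectedComponent → α → α}
    (h : ∀ c, IsStarMap (H.induce c.supp).spanningCoe (X c) (p c)) :
    IsStarMap H (⋃ c, X c) fun v => p (H.connectedComponentMk v) v := by
  intro u v huv hu hv
  have hmk : H.connectedComponentMk u = H.connectedComponentMk v :=
    ConnectedComponent.sound huv.reachable
  rw [Set.mem_iUnion, not_exists] at hu hv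
  beta_reduce
  rw [hmk]
  refine h _ u v ?_ (hu _) (hv _)
  exact ⟨huv.ne, ⟨u, hmk⟩, ⟨v, rfl⟩, huv, rfl, rfl⟩

lemma exists_subsingleton_isStarMap_of_connected [Finite α] (hH : H.Connected)
    (h : treeDepth H ≤ 3) :
    ∃ X p, X.Subsingleton ∧ (X.Nonempty → treeDepth H = 3) ∧ IsStarMap H X p := by
  obtain ⟨r, hr, hle⟩ := exists_isForestOrder_ncard_le_treeDepth H
  by_cases h3 : treeDepth H = 3
  · obtain ⟨ρ, hρ⟩ := hr.exists_root hH
    obtain ⟨p, hp⟩ := hr.exists_isStarMap (X := {ρ}) fun v _ => by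
      have := Set.ncard_sdiff_singleton_add_one (show ρ ∈ {u | r u v} from hρ v)
      have := hle v
      lia
    exact ⟨{ρ}, p, Set.subsingleton_singleton, fun _ => h3, hp⟩
  · obtain ⟨p, hp⟩ := hr.exists_isStarMap (X := ∅) fun v _ => by
      rw [Set.sdiff_empty]
      exact (hle v).trans (by lia)
    exact ⟨∅, p, Set.subsingleton_empty, fun h => absurd h Set.not_nonempty_empty, hp⟩

lemma exists_subsingleton_isStarMap [Finite α] (h : treeDepth H ≤ 3)
    (hcomp : ∀ c c' : H.ConnectedComponent,
      treeDepth (H.induce c.supp) = 3 → treeDepth (H.induce c'.supp) = 3 → c = c') :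
    ∃ X p, X.Subsingleton ∧ IsStarMap H X p := by
  have hc (c : H.ConnectedComponent) := exists_subsingleton_isStarMap_of_connected
    c.connected_toSimpleGraph ((treeDepth_induce_le H c.supp).trans h)
  choose X p hX hX3 hp using hc
  refine ⟨_, _, ?_, isStarMap_iUnion_connectedComponent fun c => (hp c).spanningCoe⟩
  simp only [Set.Subsingleton, Set.mem_iUnion]
  rintro _ ⟨c, u, hu, rfl⟩ _ ⟨c', v, hv, rfl⟩
  obtain rfl := hcomp c c' (hX3 c ⟨u, hu⟩) (hX3 c' ⟨v, hv⟩)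
  rw [hX c hu hv]

lemma IsStarMap.isMinor_Hlk {l k : ℕ} {X : Set α} {p : α → α} (hp : IsStarMap H X p)
    (hX : X.Subsingleton) (e : α ↪ Fin l) (e' : α ↪ Fin k) : IsMinor H (Hlk l k) := by
  classical
  let f v : Option (Fin l × Fin (k + 1)) :=
    if v ∈ X then none else if v = p v then some (e v, 0) else some (e (p v), (e' v).succ)
  have hf : Function.Injective f := by
    intro u v huv
    by_cases hu : u ∈ X <;> by_cases hv : v ∈ X <;> simp only [f, hu, hv, if_true, if_false] at huv
    · exact hX hu hv
    all_goals split_ifs at huv <;> simp only [Option.some.injEq, Prod.mk.injEq] at huv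
    · exact e.injective huv.1
    · exact absurd huv.2.symm (Fin.succ_ne_zero _)
    · exact absurd huv.2 (Fin.succ_ne_zero _)
    · exact e'.injective (Fin.succ_injective _ huv.2)
  refine .of_injective ⟨f, fun {u v} huv => ?_⟩ hf
  by_cases hu : u ∈ X <;> by_cases hv : v ∈ X <;> simp only [f, hu, hv, if_true, if_false]
  · exact absurd (hX hu hv) huv.ne
  · split_ifs <;> exact Hlk_adj_none_some _
  · split_ifs <;> exact (Hlk_adj_none_some _).symm
  · obtain ⟨heq, hor⟩ := hp u v huv hu hv
    by_cases hpu : u = p u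
    · have hpv : v ≠ p v := fun h => huv.ne (by rw [hpu, heq, ← h])
      rw [if_pos hpu, if_neg hpv, ← heq, ← hpu]
      exact Hlk_adj_some_some.2 ⟨rfl, Or.inl ⟨rfl, Fin.succ_ne_zero _⟩⟩
    · have hpv : v = p v := hor.resolve_left hpu
      rw [if_pos hpv, if_neg hpu, heq, ← hpv]
      exact Hlk_adj_some_some.2 ⟨rfl, Or.inr ⟨Fin.succ_ne_zero _, rfl⟩⟩

end StarMap

/-! ### Graphs without `Hlk` minor are sparse -/

section Degree

variable {V : Type*}

open Classical in
/-- The number of neighbours of `v` in `Y`: a degree in subgraphs that avoids passing to the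
induced subgraph. -/
noncomputable def degreeIn (G : SimpleGraph V) (Y : Finset V) (v : V) : ℕ :=
  (Y.filter (G.Adj v)).card

/-- The sum of the degrees of the subgraph induced by `Y`, that is, twice the number of its
edges. -/
noncomputable def degreeSum (G : SimpleGraph V) (Y : Finset V) : ℕ :=
  ∑ v ∈ Y, degreeIn G Y v

open Classical in
/-- The vertices of `W` outside `X` with a neighbour in `X`; the neighbourhood of the vertex that
`X` becomes when it is contracted in the subgraph induced by `W`. -/
noncomputable def boundaryIn (G : SimpleGraph V) (W X : Finset V) : Finset V :=
  (W \ X).filter fun y => ∃ x ∈ X, G.Adj x y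

variable {G : SimpleGraph V}

lemma degreeIn_le_card (Y : Finset V) (v : V) : degreeIn G Y v ≤ Y.card := by
  classical exact Finset.card_filter_le _ _

lemma mem_boundaryIn [DecidableEq V] {W X : Finset V} {y : V} :
    y ∈ boundaryIn G W X ↔ y ∈ W \ X ∧ ∃ x ∈ X, G.Adj x y := by
  simp only [boundaryIn, Finset.mem_filter, Finset.mem_sdiff]

lemma degreeSum_eq_degreeSum_erase_add [DecidableEq V] {Y : Finset V} {y : V} (hy : y ∈ Y) :
    degreeSum G Y = degreeSum G (Y.erase y) + 2 * degreeIn G Y y := by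
  classical
  have degreeIn_eq (v) :
      degreeIn G Y v = degreeIn G (Y.erase y) v + if G.Adj y v then 1 else 0 := by
    rw [degreeIn, degreeIn, Finset.filter_erase]
    split_ifs with h
    · exact (Finset.card_erase_add_one (Finset.mem_filter.2 ⟨hy, h.symm⟩)).symm
    · rw [Finset.erase_eq_of_notMem fun hmem => h (Finset.mem_filter.1 hmem).2.symm, add_zero]
  have hsum : ∑ v ∈ Y.erase y, (if G.Adj y v then 1 else 0) = degreeIn G Y y := by
    rw [← Finset.card_filter, Finset.filter_erase, Finset.erase_eq_of_notMem (by simp), degreeIn]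
  rw [degreeSum, ← Finset.add_sum_erase _ _ hy, Finset.sum_congr rfl fun v _ => degreeIn_eq v,
    Finset.sum_add_distrib, hsum, degreeSum]
  ring

lemma card_boundaryIn_singleton (W : Finset V) (w : V) :
    (boundaryIn G W {w}).card = degreeIn G W w := by
  classical
  rw [degreeIn]
  congr 1
  ext y
  have : G.Adj w y → y ≠ w := fun h => h.ne'
  simp only [mem_boundaryIn, Finset.mem_sdiff, Finset.mem_singleton, exists_eq_left,
    Finset.mem_filter]
  tauto

lemma card_boundaryIn_insert [DecidableEq V] {W X : Finset V} {y : V} (hy : y ∈ boundaryIn G W X) :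
    (boundaryIn G W (insert y X)).card + 1 + degreeIn G (boundaryIn G W X) y =
      (boundaryIn G W X).card + degreeIn G (W \ X) y := by
  classical
  have hunion : boundaryIn G W (insert y X) =
      (boundaryIn G W X).erase y ∪ (W \ X).filter (G.Adj y) := by
    ext z
    have : G.Adj y z → z ≠ y := fun h => h.ne'
    simp only [mem_boundaryIn, Finset.mem_sdiff, Finset.mem_insert, exists_eq_or_imp,
      Finset.mem_union, Finset.mem_erase, Finset.mem_filter]
    grind
  have hinter : (boundaryIn G W X).erase y ∩ (W \ X).filter (G.Adj y) =
      (boundaryIn G W X).filter (G.Adj y) := by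
    ext z
    have : G.Adj y z → z ≠ y := fun h => h.ne'
    simp only [mem_boundaryIn, Finset.mem_inter, Finset.mem_erase, Finset.mem_filter]
    tauto
  rw [← Finset.card_erase_add_one hy, degreeIn, degreeIn, hunion, ← hinter, add_right_comm,
    Finset.card_union_add_card_inter]
  ring

lemma dense_insert_of_degreeIn_lt [DecidableEq V] {δ : ℕ} {W X : Finset V} {y : V}
    (hy : y ∈ boundaryIn G W X) (hdeg : degreeIn G (boundaryIn G W X) y < δ)
    (hX : 2 * δ * ((W \ X).card + 1) ≤ degreeSum G (W \ X) + 2 * (boundaryIn G W X).card) :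
    2 * δ * ((W \ insert y X).card + 1) ≤
      degreeSum G (W \ insert y X) + 2 * (boundaryIn G W (insert y X)).card := by
  have hyZ := (mem_boundaryIn.1 hy).1
  have hboundary := card_boundaryIn_insert hy
  have hsum := degreeSum_eq_degreeSum_erase_add (G := G) hyZ
  rw [← Finset.card_erase_add_one hyZ, mul_add _ _ 1] at hX
  rw [Finset.sdiff_insert]
  lia

lemma exists_connectedSet_forall_le_degreeIn {δ : ℕ} (hδ : 0 < δ) {Y : Finset V}
    (hY : 2 * δ * Y.card < degreeSum G Y) :
    ∃ X N : Finset V, ConnectedSet G X ∧ Disjoint X N ∧ (∀ y ∈ N, ∃ x ∈ X, G.Adj x y) ∧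
      N.Nonempty ∧ ∀ y ∈ N, δ ≤ degreeIn G N y := by
  classical
  obtain ⟨W, ⟨⟨w, hw⟩, hWdense⟩, hWmin⟩ := exists_minimal_of_wellFoundedLT
    (fun W : Finset V => W.Nonempty ∧ 2 * δ * W.card ≤ degreeSum G W)
    ⟨Y, Finset.nonempty_iff_ne_empty.2 fun h => by simp [h, degreeSum] at hY, hY.le⟩
  -- Contracting such an `X` leaves a graph on `|W \ X| + 1` vertices which is still dense.
  obtain ⟨X, ⟨hXW, hXconn, hXdense⟩, hXmax⟩ := Set.Finite.exists_maximal
    (s := {X : Finset V | X ⊆ W ∧ ConnectedSet G X ∧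
      2 * δ * ((W \ X).card + 1) ≤ degreeSum G (W \ X) + 2 * (boundaryIn G W X).card})
    (W.powerset.finite_toSet.subset fun X hX => Finset.mem_coe.2 (Finset.mem_powerset.2 hX.1))
    ⟨{w}, Finset.singleton_subset_iff.2 hw, by simpa using connectedSet_singleton w, by
      rwa [Finset.sdiff_singleton_eq_erase, Finset.card_erase_add_one hw,
        card_boundaryIn_singleton, ← degreeSum_eq_degreeSum_erase_add hw]⟩
  refine ⟨X, boundaryIn G W X, hXconn, ?_, fun y hy => (mem_boundaryIn.1 hy).2, ?_, ?_⟩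
  · exact Finset.disjoint_left.2 fun x hx hx' =>
      (Finset.mem_sdiff.1 (mem_boundaryIn.1 hx').1).2 hx
  · by_contra hempty
    rw [Finset.not_nonempty_iff_eq_empty] at hempty
    rw [hempty, Finset.card_empty, mul_zero, add_zero, mul_add] at hXdense
    have hne : (W \ X).Nonempty := by
      by_contra h0
      rw [Finset.not_nonempty_iff_eq_empty] at h0
      simp only [h0, degreeSum, Finset.sum_empty] at hXdense
      lia
    obtain ⟨x, hx⟩ := hXconn.nonempty
    have hsub := hWmin ⟨hne, by lia⟩ Finset.sdiff_subset (hXW hx)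
    exact (Finset.mem_sdiff.1 hsub).2 hx
  · intro y hy
    by_contra! hlt
    obtain ⟨hyZ, x, hx, hxy⟩ := mem_boundaryIn.1 hy
    obtain ⟨hyW, hyX⟩ := Finset.mem_sdiff.1 hyZ
    refine hyX (hXmax ⟨Finset.insert_subset hyW hXW, ?_, ?_⟩ (Finset.subset_insert _ _)
      (Finset.mem_insert_self _ _))
    · rw [Finset.coe_insert, Set.insert_eq, Set.union_comm]
      exact hXconn.union (connectedSet_singleton y) ⟨x, hx, y, rfl, hxy⟩
    · exact dense_insert_of_degreeIn_lt hy hlt hXdense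

end Degree

section Stars

variable {V : Type*} {G : SimpleGraph V} {N : Finset V}

lemma exists_star_avoiding (hN : N.Nonempty) (U : Finset V) (k : ℕ)
    (hdeg : ∀ y ∈ N, U.card + (k + 1) ≤ degreeIn G N y) :
    ∃ s : Fin (k + 1) → V, Function.Injective s ∧ (∀ a, s a ∈ N ∧ s a ∉ U) ∧
      ∀ a ≠ 0, G.Adj (s 0) (s a) := by
  classical
  obtain ⟨y₀, hy₀⟩ := hN
  obtain ⟨y, hyN, hyU⟩ : ∃ y ∈ N, y ∉ U := by
    have := (hdeg y₀ hy₀).trans (degreeIn_le_card N y₀)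
    exact Finset.exists_mem_notMem_of_card_lt_card (by lia)
  obtain ⟨g⟩ : Nonempty (Fin k ↪ ↥(N.filter (G.Adj y) \ U)) := by
    have hcard := Finset.le_card_sdiff U (N.filter (G.Adj y))
    have := hdeg y hyN
    rw [degreeIn] at this
    exact Function.Embedding.nonempty_of_card_le (by
      rw [Fintype.card_fin, Fintype.card_coe]
      lia)
  have hg (j) : (g j : V) ∈ N ∧ G.Adj y (g j) ∧ (g j : V) ∉ U := by
    have := (g j).2
    rwa [Finset.mem_sdiff, Finset.mem_filter, and_assoc] at this
  refine ⟨Fin.cons y fun j => g j, ?_, ?_, ?_⟩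
  · refine Fin.cons_injective_iff.2 ⟨?_, Subtype.val_injective.comp g.injective⟩
    rintro ⟨j, hj⟩
    exact (hg j).2.1.ne hj.symm
  · exact Fin.cases ⟨hyN, hyU⟩ fun j => ⟨(hg j).1, (hg j).2.2⟩
  · exact Fin.cases (fun h => absurd rfl h) fun j _ => (hg j).2.1

lemma exists_disjoint_stars (hN : N.Nonempty) (m k : ℕ)
    (hdeg : ∀ y ∈ N, m * (k + 1) ≤ degreeIn G N y) :
    ∃ S : Fin m → Fin (k + 1) → V, (∀ i a, S i a ∈ N) ∧
      (∀ i a j b, S i a = S j b → i = j ∧ a = b) ∧ ∀ i, ∀ a ≠ 0, G.Adj (S i 0) (S i a) := by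
  classical
  induction m with
  | zero => exact ⟨fun i => i.elim0, fun i => i.elim0, fun i => i.elim0, fun i => i.elim0⟩
  | succ m ih =>
    obtain ⟨S, hSN, hSinj, hSadj⟩ := ih fun y hy => le_trans (by gcongr; lia) (hdeg y hy)
    let U : Finset V := Finset.univ.image (Function.uncurry S)
    have hU (i a) : S i a ∈ U :=
      Finset.mem_image_of_mem (Function.uncurry S) (Finset.mem_univ (i, a))
    have hUcard : U.card ≤ m * (k + 1) := Finset.card_image_le.trans (by simp)
    obtain ⟨s, hsinj, hs, hsadj⟩ := exists_star_avoiding hN U k fun y hy =>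
      le_trans (by rw [add_one_mul]; gcongr) (hdeg y hy)
    refine ⟨Fin.cons s S, Fin.cases (fun a => (hs a).1) hSN, ?_, Fin.cases hsadj hSadj⟩
    intro i a j b h
    cases i using Fin.cases with
    | zero =>
      cases j using Fin.cases with
      | zero => exact ⟨rfl, hsinj h⟩
      | succ j => exact absurd ((show s a = S j b from h) ▸ hU j b) (hs a).2
    | succ i =>
      cases j using Fin.cases with
      | zero => exact absurd ((show S i a = s b from h) ▸ hU i a) (hs b).2
      | succ j => exact (hSinj i a j b h).imp_left (congrArg Fin.succ)

end Stars

section Sparse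

variable {V : Type*} {G : SimpleGraph V} {l k : ℕ}

lemma degreeSum_le_of_not_isMinor_Hlk (hl : 0 < l) (hG : ¬ IsMinor (Hlk l k) G) (Y : Finset V) :
    degreeSum G Y ≤ 2 * (l * (k + 1)) * Y.card := by
  classical
  by_contra! hY
  obtain ⟨X, N, hX, hXN, hXadj, hN, hdeg⟩ :=
    exists_connectedSet_forall_le_degreeIn (Nat.mul_pos hl k.succ_pos) hY
  obtain ⟨S, hSN, hSinj, hSadj⟩ := exists_disjoint_stars hN l k hdeg
  have hXS (i a) : Disjoint (X : Set V) {S i a} :=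
    Set.disjoint_singleton_right.2 (Finset.disjoint_right.1 hXN (hSN i a))
  have htouch (i a) : Touch G X {S i a} := by
    obtain ⟨x, hx, hxS⟩ := hXadj _ (hSN i a)
    exact ⟨x, hx, _, rfl, hxS⟩
  have hdisj (i a j b) (h : ¬(i = j ∧ a = b)) : Disjoint ({S i a} : Set V) {S j b} :=
    Set.disjoint_singleton.2 fun heq => h (hSinj i a j b heq)
  refine hG (isMinor_Hlk_of_isLeafFamily (U := N) (C := fun i => {S i 0})
    (L := fun i j => {S i j.succ}) hX (fun i => connectedSet_singleton _) ?_ (fun i => hXS i 0)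
    (fun i => htouch i 0) ?_ fun i j => hXS i j.succ)
  · exact fun i j hij => hdisj i 0 j 0 fun h => hij h.1
  · refine
      { conn := fun i j => connectedSet_singleton _
        subset := fun i j => Set.singleton_subset_iff.2 (hSN i j.succ)
        disj := fun i a j b hne => hdisj i a.succ j b.succ fun h => hne ?_
        disj_block := fun i a j => hdisj i a.succ j 0 fun h => Fin.succ_ne_zero a h.2
        touch_block := fun i j => ⟨_, rfl, _, rfl, (hSadj i _ (Fin.succ_ne_zero j)).symm⟩
        touch_target := fun i j => (htouch i j.succ).symm }
    rw [h.1, Fin.succ_injective _ h.2]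

lemma exists_degreeIn_le_of_not_isMinor_Hlk (hl : 0 < l) (hG : ¬ IsMinor (Hlk l k) G)
    {Y : Finset V} (hY : Y.Nonempty) : ∃ y ∈ Y, degreeIn G Y y ≤ 2 * (l * (k + 1)) :=
  Finset.exists_le_of_sum_le hY <| by
    rw [Finset.sum_const, smul_eq_mul, mul_comm]
    exact degreeSum_le_of_not_isMinor_Hlk hl hG Y

end Sparse

/-! ### Many vertices with a common small neighbourhood -/

section Linking

/-- A graph `J` on `A` which arises from `G` by adding edges inside `A`, each edge `e` being
realized by a path of length two through its own vertex `f e` outside `A`. The values of `f` outside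
the edge set of `J` are irrelevant. -/
structure IsLinking {W : Type*} (G : SimpleGraph W) (A : Set W) (J : SimpleGraph A)
    (f : Sym2 A → W) : Prop where
  injOn : Set.InjOn f J.edgeSet
  notMem : ∀ e ∈ J.edgeSet, f e ∉ A
  adj : ∀ e ∈ J.edgeSet, ∀ x ∈ e, G.Adj (f e) x

namespace IsLinking

variable {W : Type*} {G : SimpleGraph W} {A : Set W} {J : SimpleGraph A} {f : Sym2 A → W}

protected lemma isMinor (h : IsLinking G A J f) : IsMinor J G := by
  -- The vertex `f e` is contracted into an arbitrarily chosen end of `e`.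
  let B (x : A) : Set W := {x.1} ∪ ⋃ e ∈ {e ∈ J.edgeSet | e.out.1 = x}, {f e}
  have hfB {e : Sym2 A} (he : e ∈ J.edgeSet) : f e ∈ B e.out.1 :=
    Or.inr (Set.mem_biUnion (s := {e' ∈ J.edgeSet | e'.out.1 = e.out.1}) ⟨he, rfl⟩ rfl)
  have htouch {e : Sym2 A} (he : e ∈ J.edgeSet) {y : A} (hy : y ∈ e) :
      Touch G (B e.out.1) (B y) := ⟨f e, hfB he, y, Or.inl rfl, h.adj e he y hy⟩
  refine .of_connectedSet B (fun x => (connectedSet_singleton _).union_biUnion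
    (fun _ _ => connectedSet_singleton _) ?_) (fun x y hxy => ?_) fun x y hxy => ?_
  · rintro e ⟨he, rfl⟩
    exact ⟨_, rfl, _, rfl, (h.adj e he _ e.out_fst_mem).symm⟩
  · simp only [B, Set.disjoint_left, Set.mem_union, Set.mem_singleton_iff, Set.mem_iUnion₂]
    rintro v (rfl | ⟨e, ⟨he, rfl⟩, rfl⟩) (hv | ⟨e', ⟨he', rfl⟩, hv⟩)
    · exact hxy (Subtype.ext hv)
    · exact h.notMem e' he' (hv ▸ x.2)
    · exact h.notMem e he (hv ▸ y.2)
    · exact hxy (by rw [h.injOn he he' hv])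
  · have hx := htouch hxy (Sym2.mem_mk_left x y)
    have hy := htouch hxy (Sym2.mem_mk_right x y)
    obtain heq | heq : s(x, y).out.1 = x ∨ s(x, y).out.1 = y :=
      Sym2.mem_iff.1 (Sym2.out_fst_mem _)
    · rwa [heq] at hy
    · rw [heq] at hx
      exact hx.symm

lemma sup_edge (h : IsLinking G A J f) {b : W} (hbA : b ∉ A) (hb : b ∉ f '' J.edgeSet)
    {x y : A} (hxy : ¬ J.Adj x y) (hbx : G.Adj b x) (hby : G.Adj b y) :
    ∃ f', IsLinking G A (J ⊔ edge x y) f' := by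
  classical
  have hmem {e : Sym2 A} (he : e ∈ (J ⊔ edge x y).edgeSet) : e ∈ J.edgeSet ∨ e = s(x, y) := by
    rw [edgeSet_sup] at he
    exact he.imp_right fun he => edgeSet_edge_subset he
  have hold {e : Sym2 A} (he : e ∈ J.edgeSet) : Function.update f s(x, y) b e = f e :=
    Function.update_of_ne (fun heq => hxy (by rwa [heq] at he)) _ _
  refine ⟨Function.update f s(x, y) b, ?_, fun e he => ?_, fun e he => ?_⟩
  · intro e he e' he' heq
    rcases hmem he with he | rfl <;> rcases hmem he' with he' | rfl
    · rw [hold he, hold he'] at heq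
      exact h.injOn he he' heq
    · rw [hold he, Function.update_self] at heq
      exact absurd ⟨e, he, heq⟩ hb
    · rw [hold he', Function.update_self] at heq
      exact absurd ⟨e', he', heq.symm⟩ hb
    · rfl
  · rcases hmem he with he | rfl
    · rw [hold he]
      exact h.notMem e he
    · rwa [Function.update_self]
  · rcases hmem he with he | rfl
    · rw [hold he]
      exact h.adj e he
    · rw [Function.update_self]
      rintro z hz
      obtain rfl | rfl := Sym2.mem_iff.1 hz <;> assumption

end IsLinking

lemma two_mul_ncard_edgeSet_eq_degreeSum {A : Type*} [Fintype A] (J : SimpleGraph A) :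
    2 * J.edgeSet.ncard = degreeSum J Finset.univ := by
  classical
  rw [← coe_edgeFinset, Set.ncard_coe_finset, ← sum_degrees_eq_twice_card_edges, degreeSum]
  simp only [degreeIn, ← neighborFinset_eq_filter, card_neighborFinset_eq_degree]

/-- Linking as many pairs of vertices of `A` as possible turns the neighbourhoods of all unused
vertices into cliques, and sparseness of the linked graph bounds the number of used vertices. -/
lemma exists_isClique_neighbors {W : Type*} {G : SimpleGraph W} {l k : ℕ} (hl : 0 < l)
    (hG : ¬ IsMinor (Hlk l k) G) (A : Finset W) :
    ∃ (J : SimpleGraph A) (F : Finset W), ¬ IsMinor (Hlk l k) J ∧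
      F.card ≤ l * (k + 1) * A.card ∧ ∀ b ∉ A, b ∉ F → J.IsClique {x | G.Adj b x} := by
  classical
  obtain ⟨J, ⟨f, hf⟩, hJmax⟩ := Set.Finite.exists_maximal
    (Set.toFinite {J : SimpleGraph A | ∃ f, IsLinking G A J f})
    (by
      by_cases h : Nonempty W
      · exact ⟨⊥, fun _ => Classical.arbitrary W, by simp, by simp, by simp⟩
      · exact ⟨⊥, fun e => (h ⟨e.out.1⟩).elim, by simp, by simp, by simp⟩)
  have hJ : ¬ IsMinor (Hlk l k) J := fun h => hG (h.trans hf.isMinor)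
  refine ⟨J, (f '' J.edgeSet).toFinset, hJ, ?_, fun b hbA hb x hbx y hby hxy => ?_⟩
  · have hsum := degreeSum_le_of_not_isMinor_Hlk hl hJ Finset.univ
    rw [← two_mul_ncard_edgeSet_eq_degreeSum, Finset.card_univ, Fintype.card_coe] at hsum
    rw [← Set.ncard_eq_toFinset_card']
    exact (Set.ncard_image_le (Set.toFinite _)).trans
      (Nat.le_of_mul_le_mul_left (by rwa [← mul_assoc]) two_pos)
  · by_contra hJxy
    obtain ⟨f', hf'⟩ := hf.sup_edge hbA (fun h => hb (Set.mem_toFinset.2 h)) hJxy hbx hby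
    exact hJxy (hJmax ⟨f', hf'⟩ le_sup_left (Or.inr (by simp [edge_adj, hxy])))

end Linking

section Cliques

variable {A W : Type*} {J : SimpleGraph A} {D T : ℕ} {N : W → Finset A}

lemma exists_mem_and_subset_insert [DecidableEq A]
    (hJ : ∀ Y : Finset A, Y.Nonempty → ∃ y ∈ Y, degreeIn J Y y ≤ D) (Y : Finset A) (U : Finset W)
    (hU : T * Y.card < U.card) (hN : ∀ b ∈ U, (N b).Nonempty) (hNY : ∀ b ∈ U, N b ⊆ Y)
    (hclique : ∀ b ∈ U, J.IsClique (N b)) :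
    ∃ (x : A) (R : Finset A) (U' : Finset W), R.card ≤ D ∧ U' ⊆ U ∧ T < U'.card ∧
      ∀ b ∈ U', x ∈ N b ∧ N b ⊆ insert x R := by
  classical
  induction Y using Finset.strongInduction generalizing U with
  | H Y ih =>
    obtain ⟨b₀, hb₀⟩ := Finset.card_pos.1 (Nat.zero_lt_of_lt hU)
    obtain ⟨y, hy, hdeg⟩ := hJ Y ((hN b₀ hb₀).mono (hNY b₀ hb₀))
    by_cases hT : T < (U.filter (y ∈ N ·)).card
    · rw [degreeIn] at hdeg
      refine ⟨y, _, _, hdeg, Finset.filter_subset _ _, hT, fun b hb => ?_⟩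
      obtain ⟨hb, hyb⟩ := Finset.mem_filter.1 hb
      refine ⟨hyb, fun z hz => Finset.mem_insert.2 (or_iff_not_imp_left.2 fun hzy => ?_)⟩
      exact Finset.mem_filter.2 ⟨hNY b hb hz, hclique b hb hyb hz (Ne.symm hzy)⟩
    · have hsub : U.filter (y ∉ N ·) ⊆ U := Finset.filter_subset _ _
      obtain ⟨x, R, U', hR, hU', hT', hx⟩ := ih (Y.erase y) (Finset.erase_ssubset hy)
        (U.filter (y ∉ N ·))
        (by
          have := Finset.card_filter_add_card_filter_not (s := U) (y ∈ N ·)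
          rw [← Finset.card_erase_add_one hy, mul_add_one] at hU
          lia)
        (fun b hb => hN b (hsub hb))
        (fun b hb => Finset.subset_erase.2 ⟨hNY b (hsub hb), (Finset.mem_filter.1 hb).2⟩)
        (fun b hb => hclique b (hsub hb))
      exact ⟨x, R, U', hR, hU'.trans hsub, hT', hx⟩

lemma exists_le_card_filter_eq_of_isClique [Fintype A] [DecidableEq A]
    (hJ : ∀ Y : Finset A, Y.Nonempty → ∃ y ∈ Y, degreeIn J Y y ≤ D) (U : Finset W)
    (hU : 2 ^ D * T * Fintype.card A < U.card) (hN : ∀ b ∈ U, (N b).Nonempty)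
    (hclique : ∀ b ∈ U, J.IsClique (N b)) :
    ∃ S : Finset A, S.Nonempty ∧ S.card ≤ D + 1 ∧ T ≤ (U.filter (N · = S)).card := by
  obtain ⟨x, R, U', hR, hU', hT, hx⟩ :=
    exists_mem_and_subset_insert hJ Finset.univ U hU hN (fun _ _ => Finset.subset_univ _) hclique
  obtain ⟨Q, hQ, hQT⟩ := Finset.exists_le_card_fiber_of_mul_le_card_of_maps_to
    (s := U') (t := R.powerset) (f := fun b => (N b).erase x) (n := T)
    (fun b hb => Finset.mem_powerset.2 (Finset.subset_insert_iff.1 (hx b hb).2))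
    ⟨∅, Finset.empty_mem_powerset R⟩
    (by
      rw [Finset.card_powerset]
      exact (Nat.mul_le_mul_right T (Nat.pow_le_pow_right two_pos hR)).trans hT.le)
  refine ⟨insert x Q, Finset.insert_nonempty x Q, ?_, hQT.trans (Finset.card_le_card ?_)⟩
  · have := (Finset.card_le_card (Finset.mem_powerset.1 hQ)).trans hR
    exact (Finset.card_insert_le x Q).trans (by lia)
  · intro b hb
    obtain ⟨hb, hbQ⟩ := Finset.mem_filter.1 hb
    exact Finset.mem_filter.2 ⟨hU' hb, by rw [← hbQ, Finset.insert_erase (hx b hb).1]⟩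

end Cliques

lemma mul_card_filter_lt_degreeIn_le {W : Type*} [Fintype W] {G : SimpleGraph W} {l k : ℕ}
    (hl : 0 < l) (hG : ¬ IsMinor (Hlk l k) G) (d : ℕ) :
    (d + 1) * (Finset.univ.filter fun v => d < degreeIn G Finset.univ v).card ≤
      2 * (l * (k + 1)) * Fintype.card W := by
  refine le_trans ?_ (degreeSum_le_of_not_isMinor_Hlk hl hG Finset.univ)
  rw [mul_comm, ← smul_eq_mul]
  exact (Finset.card_nsmul_le_sum _ _ _ fun v hv => (Finset.mem_filter.1 hv).2).trans
    (Finset.sum_le_sum_of_subset (Finset.filter_subset _ _))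

lemma exists_common_neighborSet {W : Type*} [Fintype W] [Nonempty W] {G : SimpleGraph W}
    {l k D T d : ℕ} (hl : 0 < l) (hG : ¬ IsMinor (Hlk l k) G) (hD : D = 2 * (l * (k + 1)))
    (hd : D * (2 ^ D * T + D + 2) ≤ d + 1) (hnbr : ∀ v, ∃ w, G.Adj v w)
    (hheavy : ∀ u v, G.Adj u v → d < degreeIn G Finset.univ u ∨ d < degreeIn G Finset.univ v) :
    ∃ S B : Finset W, S.Nonempty ∧ S.card ≤ D + 1 ∧ T ≤ B.card ∧
      ∀ b ∈ B, ∀ w, G.Adj b w ↔ w ∈ S := by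
  classical
  let A : Finset W := Finset.univ.filter fun v => d < degreeIn G Finset.univ v
  have hadjA {b w : W} (hb : b ∉ A) (hbw : G.Adj b w) : w ∈ A :=
    Finset.mem_filter.2 ⟨Finset.mem_univ w, (hheavy b w hbw).resolve_left (by simpa [A] using hb)⟩
  have hApos : 0 < A.card := by
    obtain ⟨v⟩ := ‹Nonempty W›
    obtain ⟨w, hvw⟩ := hnbr v
    exact Finset.card_pos.2 (by_cases (fun hv : v ∈ A => ⟨v, hv⟩) fun hv => ⟨w, hadjA hv hvw⟩)
  obtain ⟨J, F, hJ, hF, hclique⟩ := exists_isClique_neighbors hl hG A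
  let N (b : W) : Finset A := Finset.univ.filter fun x => G.Adj b x
  have hU : 2 ^ D * T * Fintype.card A < (Aᶜ \ F).card := by
    have hDpos : 0 < D := by rw [hD]; positivity
    have hA := mul_card_filter_lt_degreeIn_le hl hG d
    rw [← hD, ← Finset.card_add_card_compl A] at hA
    change (d + 1) * A.card ≤ _ at hA
    have hcompl : (2 ^ D * T + D + 1) * A.card ≤ Aᶜ.card := by
      refine Nat.le_of_mul_le_mul_left ?_ hDpos
      have := (Nat.mul_le_mul_right A.card hd).trans hA
      linarith
    have hFcard : F.card ≤ D * A.card :=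
      hF.trans (Nat.mul_le_mul_right _ (hD ▸ Nat.le_mul_of_pos_left _ two_pos))
    have := Finset.le_card_sdiff F Aᶜ
    rw [add_one_mul, add_mul] at hcompl
    rw [Fintype.card_coe]
    lia
  have hmemU {b : W} (hb : b ∈ Aᶜ \ F) : b ∉ A ∧ b ∉ F := by simpa using hb
  obtain ⟨S, hS, hScard, hT⟩ := exists_le_card_filter_eq_of_isClique (N := N)
    (fun Y hY => hD ▸ exists_degreeIn_le_of_not_isMinor_Hlk hl hJ hY) (Aᶜ \ F) hU
    (fun b hb => by
      obtain ⟨w, hw⟩ := hnbr b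
      exact ⟨⟨w, hadjA (hmemU hb).1 hw⟩, Finset.mem_filter.2 ⟨Finset.mem_univ _, hw⟩⟩)
    (fun b hb => by simpa [N] using hclique b (hmemU hb).1 (hmemU hb).2)
  refine ⟨S.map (Function.Embedding.subtype _), _, hS.map, by rwa [Finset.card_map], hT, ?_⟩
  intro b hb w
  obtain ⟨hbU, rfl⟩ := Finset.mem_filter.1 hb
  have := hadjA (w := w) (hmemU hbU).1
  simpa [N] using this

/-! ### Clumps -/

section Connector

lemma Touch.exists_of_subset_iUnion {V ι : Type*} {G : SimpleGraph V} {s D : Set V}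
    (h : Touch G s D) {T : ι → Set V} (hD : D ⊆ ⋃ i, T i) : ∃ i, Touch G s (T i) := by
  obtain ⟨x, hx, y, hy, hxy⟩ := h
  obtain ⟨i, hi⟩ := Set.mem_iUnion.1 (hD hy)
  exact ⟨i, x, hx, y, hi, hxy⟩

/-- Pairwise disjoint connected sets `L j`, each of which joins `D₁` to `D₂` and avoids the
territories `U₁` and `U₂`, in which `D₁` and `D₂` are meant to lie. -/
structure IsConnector {V β : Type*} (G : SimpleGraph V) (L : β → Set V) (D₁ U₁ D₂ U₂ : Set V) :
    Prop where
  conn : ∀ j, ConnectedSet G (L j)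
  disj : Pairwise fun j j' => Disjoint (L j) (L j')
  disj_left : ∀ j, Disjoint (L j) U₁
  disj_right : ∀ j, Disjoint (L j) U₂
  touch_left : ∀ j, Touch G (L j) D₁
  touch_right : ∀ j, Touch G (L j) D₂

namespace IsConnector

variable {V β : Type*} {G : SimpleGraph V} {L : β → Set V} {D₁ U₁ D₂ U₂ : Set V}

protected lemma symm (h : IsConnector G L D₁ U₁ D₂ U₂) : IsConnector G L D₂ U₂ D₁ U₁ :=
  ⟨h.conn, h.disj, h.disj_right, h.disj_left, h.touch_right, h.touch_left⟩

lemma comp (h : IsConnector G L D₁ U₁ D₂ U₂) {γ : Type*} {g : γ → β}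
    (hg : Function.Injective g) : IsConnector G (L ∘ g) D₁ U₁ D₂ U₂ where
  conn _ := h.conn _
  disj := h.disj.comp_of_injective hg
  disj_left _ := h.disj_left _
  disj_right _ := h.disj_right _
  touch_left _ := h.touch_left _
  touch_right _ := h.touch_right _

lemma exists_comp {γ ι₁ ι₂ : Type*} [Fintype β] [Fintype γ] [Fintype ι₁] [Fintype ι₂]
    (h : IsConnector G L D₁ U₁ D₂ U₂) {T₁ : ι₁ → Set V} {T₂ : ι₂ → Set V} (h₁ : D₁ ⊆ ⋃ i, T₁ i)
    (h₂ : D₂ ⊆ ⋃ i, T₂ i)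
    (hcard : Fintype.card ι₁ * Fintype.card ι₂ * Fintype.card γ < Fintype.card β) :
    ∃ (a : ι₁) (b : ι₂) (g : γ → β), IsConnector G (L ∘ g) (T₁ a) U₁ (T₂ b) U₂ := by
  classical
  choose f₁ hf₁ using fun j => (h.touch_left j).exists_of_subset_iUnion h₁
  choose f₂ hf₂ using fun j => (h.touch_right j).exists_of_subset_iUnion h₂
  obtain ⟨j₀⟩ := Fintype.card_pos_iff.1 (Nat.zero_lt_of_lt hcard)
  have : Nonempty (ι₁ × ι₂) := ⟨(f₁ j₀, f₂ j₀)⟩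
  obtain ⟨⟨a, b⟩, hab⟩ := Fintype.exists_le_card_fiber_of_mul_le_card (fun j => (f₁ j, f₂ j))
    (by rw [Fintype.card_prod]; exact hcard.le)
  obtain ⟨g⟩ := Function.Embedding.nonempty_of_card_le
    (α := γ) (β := ↥(Finset.univ.filter fun j => (f₁ j, f₂ j) = (a, b))) (by rwa [Fintype.card_coe])
  have hg (j) : f₁ (g j) = a ∧ f₂ (g j) = b :=
    Prod.mk.inj (Finset.mem_filter.1 (g j).2).2
  have hcomp := h.comp (Subtype.val_injective.comp g.injective)
  exact ⟨a, b, fun j => g j, hcomp.conn, hcomp.disj, hcomp.disj_left, hcomp.disj_right,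
    fun j => by have := hf₁ (g j); rwa [(hg j).1] at this,
    fun j => by have := hf₂ (g j); rwa [(hg j).2] at this⟩

end IsConnector

/-- A clump is a vertex set `D` obtained from single vertices by repeatedly merging two clumps that
are joined by a connector of `t` sets. It comes with a connected territory `U ⊇ D`, which contains
the territories of the parts and the connectors of all merges. -/
inductive Clump {V : Type*} (G : SimpleGraph V) (t : ℕ) : Set V → Set V → Prop
  | single {v : V} {U : Set V} (hv : v ∈ U) (hU : ConnectedSet G U) : Clump G t {v} U
  | merge {D₁ U₁ D₂ U₂ U : Set V} {L : Fin t → Set V} (h₁ : Clump G t D₁ U₁)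
      (h₂ : Clump G t D₂ U₂) (hdisj : Disjoint U₁ U₂) (hL : IsConnector G L D₁ U₁ D₂ U₂)
      (hsub : U₁ ∪ U₂ ∪ ⋃ j, L j ⊆ U) (hU : ConnectedSet G U) : Clump G t (D₁ ∪ D₂) U

namespace Clump

variable {V : Type*} {G : SimpleGraph V} {t : ℕ} {D U : Set V}

lemma conn (h : Clump G t D U) : ConnectedSet G U := by
  cases h <;> assumption

lemma subset (h : Clump G t D U) : D ⊆ U := by
  induction h with
  | single hv _ => exact Set.singleton_subset_iff.2 hv
  | merge _ _ _ _ hsub _ ih₁ ih₂ =>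
    exact (Set.union_subset_union ih₁ ih₂).trans (Set.subset_union_left.trans hsub)

lemma mono (h : Clump G t D U) {U' : Set V} (hUU' : U ⊆ U') (hU' : ConnectedSet G U') :
    Clump G t D U' := by
  cases h with
  | single hv _ => exact .single (hUU' hv) hU'
  | merge h₁ h₂ hdisj hL hsub _ => exact .merge h₁ h₂ hdisj hL (hsub.trans hUU') hU'

end Clump

end Connector

/-! ### Few neighbours in a clump -/

/-- Pairwise disjoint connected blocks `T i` inside `U` which cover `D` and all meet `N`, where `N`
stands for the neighbourhood of a vertex. -/
structure IsBlockSystem {V ι : Type*} (G : SimpleGraph V) (N D U : Set V) (T : ι → Set V) :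
    Prop where
  conn : ∀ i, ConnectedSet G (T i)
  disj : Pairwise fun i i' => Disjoint (T i) (T i')
  subset : ∀ i, T i ⊆ U
  meets : ∀ i, (T i ∩ N).Nonempty
  cover : D ⊆ ⋃ i, T i

/-- The union of all blocks on the other side than `T i`. -/
def oppositeBlocks {V ι : Type*} (T : ι → Set V) (side : ι → Bool) (i : ι) : Set V :=
  ⋃ i' ∈ {i' | side i' ≠ side i}, T i'

/-- A block system whose blocks are split into two sides such that, as soon as there are at least
two blocks, each block has `q` leaves of its own, joining it to the blocks of the other side. -/
structure IsConfig {V ι : Type*} (G : SimpleGraph V) (N : Set V) (q : ℕ) (D U : Set V)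
    (T : ι → Set V) (side : ι → Bool) : Prop extends IsBlockSystem G N D U T where
  exists_leaves : Nontrivial ι →
    ∃ L : ι → Fin q → Set V, IsLeafFamily G U T (oppositeBlocks T side) L

section Config

variable {V ι ι₁ ι₂ : Type*} {G : SimpleGraph V} {N D U D₁ U₁ D₂ U₂ : Set V} {q : ℕ}

lemma oppositeBlocks_not {T : ι → Set V} {side : ι → Bool} :
    oppositeBlocks T (fun i => !side i) = oppositeBlocks T side := by
  funext i
  simp only [oppositeBlocks, ne_eq, Bool.not_inj_iff]

lemma subset_oppositeBlocks {T : ι → Set V} {side : ι → Bool} {i i' : ι} (h : side i' ≠ side i) :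
    T i' ⊆ oppositeBlocks T side i :=
  Set.subset_biUnion_of_mem (u := T) (s := {i' | side i' ≠ side i}) h

lemma oppositeBlocks_subset_comp {T : ι → Set V} {side : ι → Bool} (f : ι₁ → ι) (i : ι₁) :
    oppositeBlocks (T ∘ f) (side ∘ f) i ⊆ oppositeBlocks T side (f i) :=
  Set.iUnion₂_subset fun i' h => subset_oppositeBlocks (T := T) (i' := f i') h

namespace IsBlockSystem

variable {T : ι → Set V}

lemma of_connectedSet (hU : ConnectedSet G U) (hD : D ⊆ U) (hN : (U ∩ N).Nonempty) :
    IsBlockSystem G N D U fun _ : Unit => U where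
  conn _ := hU
  disj := Subsingleton.pairwise
  subset _ := subset_rfl
  meets _ := hN
  cover := hD.trans (Set.subset_iUnion (fun _ : Unit => U) ())

lemma union_at (h : IsBlockSystem G N D U T) {Z U' : Set V} {a : ι} (hZ : ConnectedSet G Z)
    (hUZ : Disjoint U Z) (ha : Touch G (T a) Z) (hU' : U ∪ Z ⊆ U') :
    IsBlockSystem G N (D ∪ Z) U' fun i => T i ∪ ⋃ _ : i = a, Z where
  conn i := by
    by_cases hi : i = a
    · subst hi
      simpa using (h.conn i).union hZ ha
    · simpa [hi] using h.conn i
  disj i i' hii' := by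
    simp only [Set.disjoint_union_left, Set.disjoint_union_right, Set.disjoint_iUnion_left,
      Set.disjoint_iUnion_right]
    exact ⟨⟨h.disj hii', fun _ => (hUZ.mono_left (h.subset i')).symm⟩,
      fun hi' => ⟨hUZ.mono_left (h.subset i), fun hi => absurd (hi.trans hi'.symm) hii'⟩⟩
  subset i :=
    (Set.union_subset_union (h.subset i) (Set.iUnion_subset fun _ => subset_rfl)).trans hU'
  meets i := (h.meets i).mono (Set.inter_subset_inter_left N Set.subset_union_left)
  cover := by
    rw [Set.iUnion_union_distrib]
    refine Set.union_subset_union h.cover (Set.subset_iUnion_of_subset a ?_)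
    exact Set.subset_iUnion (fun _ : a = a => Z) rfl

lemma sumElim {T₁ : ι₁ → Set V} {T₂ : ι₂ → Set V} (h₁ : IsBlockSystem G N D₁ U₁ T₁)
    (h₂ : IsBlockSystem G N D₂ U₂ T₂) (hdisj : Disjoint U₁ U₂) (hU : U₁ ∪ U₂ ⊆ U) :
    IsBlockSystem G N (D₁ ∪ D₂) U (Sum.elim T₁ T₂) where
  conn := Sum.rec h₁.conn h₂.conn
  disj := by
    rintro (i | i) (i' | i') hii'
    · exact h₁.disj fun h => hii' (congrArg _ h)
    · exact hdisj.mono (h₁.subset i) (h₂.subset i')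
    · exact hdisj.symm.mono (h₂.subset i) (h₁.subset i')
    · exact h₂.disj fun h => hii' (congrArg _ h)
  subset := Sum.rec (fun i => (h₁.subset i).trans (Set.subset_union_left.trans hU))
    fun i => (h₂.subset i).trans (Set.subset_union_right.trans hU)
  meets := Sum.rec h₁.meets h₂.meets
  cover := by
    rw [Set.iUnion_sum]
    exact Set.union_subset_union h₁.cover h₂.cover

end IsBlockSystem

namespace IsConfig

variable {T : ι → Set V} {side : ι → Bool}

protected lemma not (h : IsConfig G N q D U T side) : IsConfig G N q D U T fun i => !side i :=
  ⟨h.toIsBlockSystem, by rw [oppositeBlocks_not]; exact h.exists_leaves⟩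

lemma exists_absorb {β : Type*} [Nonempty β] {L : β → Set V} (h : IsConfig G N q D₁ U₁ T side)
    (hL : IsConnector G L D₁ U₁ D₂ U₂) (hU₂ : ConnectedSet G U₂) (hD₂ : D₂ ⊆ U₂)
    (hdisj : Disjoint U₁ U₂) (hsub : U₁ ∪ U₂ ∪ ⋃ j, L j ⊆ U) :
    ∃ T' : ι → Set V, IsConfig G N q (D₁ ∪ D₂) U T' side := by
  classical
  obtain ⟨j⟩ := ‹Nonempty β›
  have hZ : ConnectedSet G (L j ∪ U₂) :=
    (hL.conn j).union hU₂ ((hL.touch_right j).mono subset_rfl hD₂)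
  have hUZ : Disjoint U₁ (L j ∪ U₂) := Set.disjoint_union_right.2 ⟨(hL.disj_left j).symm, hdisj⟩
  have hU : U₁ ∪ (L j ∪ U₂) ⊆ U := by
    rw [Set.union_comm (L j), ← Set.union_assoc]
    exact (Set.union_subset_union_right _ (Set.subset_iUnion L j)).trans hsub
  obtain ⟨x, hx, y, hy, hxy⟩ := hL.touch_left j
  obtain ⟨a, ha⟩ := Set.mem_iUnion.1 (h.cover hy)
  have hblock := h.union_at hZ hUZ ⟨y, ha, x, Or.inl hx, hxy.symm⟩ hU
  refine ⟨_, { hblock with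
    cover := (Set.union_subset_union_right _
      (hD₂.trans Set.subset_union_right)).trans hblock.cover
    exists_leaves := fun hι => ?_ }⟩
  obtain ⟨K, hK⟩ := h.exists_leaves hι
  exact ⟨K, {
    conn := hK.conn
    subset := fun i j => (hK.subset i j).trans (Set.subset_union_left.trans hU)
    disj := hK.disj
    disj_block := fun i j i' => Set.disjoint_union_right.2 ⟨hK.disj_block i j i',
      Set.disjoint_iUnion_right.2 fun _ => hUZ.mono_left (hK.subset i j)⟩
    touch_block := fun i j => (hK.touch_block i j).mono subset_rfl Set.subset_union_left
    touch_target := fun i j => (hK.touch_target i j).mono subset_rfl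
      (Set.biUnion_mono subset_rfl fun _ _ => Set.subset_union_left) }⟩

lemma exists_isLeafFamily {a : ι} {K : Fin q → Set V} {R : ι → Set V}
    (h : IsConfig G N q D₁ U₁ T side) (hK : IsConnector G K (T a) U₁ D₂ U₂)
    (hR : ∀ i, oppositeBlocks T side i ⊆ R i) (ha : D₂ ⊆ R a) :
    ∃ L : ι → Fin q → Set V, IsLeafFamily G (U₁ ∪ ⋃ j, K j) T R L := by
  rcases subsingleton_or_nontrivial ι with hι | hι
  · refine ⟨fun _ => K, {
      conn := fun _ => hK.conn
      subset := fun _ j => Set.subset_union_of_subset_right (Set.subset_iUnion K j) _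
      disj := fun i j i' j' hne => hK.disj fun hj => hne (by rw [Subsingleton.elim i i', hj])
      disj_block := fun _ j i' => (hK.disj_left j).mono_right (h.subset i')
      touch_block := fun i j => Subsingleton.elim a i ▸ hK.touch_left j
      touch_target := fun i j => (hK.touch_right j).mono subset_rfl (Subsingleton.elim a i ▸ ha) }⟩
  · obtain ⟨L, hL⟩ := h.exists_leaves hι
    exact ⟨L, hL.reindex Function.injective_id (fun _ => Function.injective_id)
      Set.subset_union_left hR⟩

lemma sumElim {T₁ : ι₁ → Set V} {T₂ : ι₂ → Set V} {side₁ : ι₁ → Bool} {side₂ : ι₂ → Bool}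
    {a : ι₁} {b : ι₂} {K : Fin q ⊕ Fin q → Set V} (h₁ : IsConfig G N q D₁ U₁ T₁ side₁)
    (h₂ : IsConfig G N q D₂ U₂ T₂ side₂) (hdisj : Disjoint U₁ U₂)
    (hK : IsConnector G K (T₁ a) U₁ (T₂ b) U₂) (hsub : U₁ ∪ U₂ ∪ ⋃ j, K j ⊆ U)
    (hab : side₁ a ≠ side₂ b) :
    IsConfig G N q (D₁ ∪ D₂) U (Sum.elim T₁ T₂) (Sum.elim side₁ side₂) := by
  refine ⟨h₁.toIsBlockSystem.sumElim h₂.toIsBlockSystem hdisj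
    (Set.subset_union_left.trans hsub), fun _ => ?_⟩
  let T := Sum.elim T₁ T₂
  let side := Sum.elim side₁ side₂
  let R := oppositeBlocks T side
  obtain ⟨L₁, hL₁⟩ := h₁.exists_isLeafFamily (hK.comp Sum.inl_injective)
    (R := R ∘ Sum.inl) (oppositeBlocks_subset_comp (T := T) (side := side) Sum.inl)
    (subset_oppositeBlocks (T := T) (side := side) (i' := Sum.inr b) hab.symm)
  obtain ⟨L₂, hL₂⟩ := h₂.exists_isLeafFamily (hK.symm.comp Sum.inr_injective)
    (R := R ∘ Sum.inr) (oppositeBlocks_subset_comp (T := T) (side := side) Sum.inr)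
    (subset_oppositeBlocks (T := T) (side := side) (i' := Sum.inl a) hab)
  have hterr : Disjoint (U₁ ∪ ⋃ j, (K ∘ Sum.inl) j) (U₂ ∪ ⋃ j, (K ∘ Sum.inr) j) := by
    simp only [Set.disjoint_union_left, Set.disjoint_union_right, Set.disjoint_iUnion_left,
      Set.disjoint_iUnion_right]
    exact ⟨⟨hdisj, fun _ => hK.disj_right _⟩,
      fun _ => ⟨(hK.disj_left _).symm, fun _ => hK.disj Sum.inl_ne_inr⟩⟩
  have hL := hL₁.sum hL₂ hterr (fun i => (h₁.subset i).trans Set.subset_union_left)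
    fun i => (h₂.subset i).trans Set.subset_union_left
  rw [Sum.elim_comp_inl_inr] at hL
  refine ⟨_, hL.reindex Function.injective_id (fun _ => Function.injective_id) ?_
    fun _ => subset_rfl⟩
  refine subset_trans ?_ hsub
  rw [Set.iUnion_sum, Set.union_union_union_comm]
  rfl

end IsConfig

lemma IsConfig.exists_merge {t M : ℕ} (ht : M * M * (2 * q) < t) [Fintype ι₁] [Fintype ι₂]
    (hι₁ : Fintype.card ι₁ ≤ M) (hι₂ : Fintype.card ι₂ ≤ M) {T₁ : ι₁ → Set V} {T₂ : ι₂ → Set V}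
    {side₁ : ι₁ → Bool} {side₂ : ι₂ → Bool} {L : Fin t → Set V}
    (h₁ : IsConfig G N q D₁ U₁ T₁ side₁) (h₂ : IsConfig G N q D₂ U₂ T₂ side₂)
    (hdisj : Disjoint U₁ U₂) (hL : IsConnector G L D₁ U₁ D₂ U₂)
    (hsub : U₁ ∪ U₂ ∪ ⋃ j, L j ⊆ U) :
    ∃ side : ι₁ ⊕ ι₂ → Bool, IsConfig G N q (D₁ ∪ D₂) U (Sum.elim T₁ T₂) side := by
  obtain ⟨a, b, g, hK⟩ := hL.exists_comp (γ := Fin q ⊕ Fin q) h₁.cover h₂.cover (by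
    rw [Fintype.card_sum, Fintype.card_fin, Fintype.card_fin, ← two_mul]
    exact lt_of_le_of_lt (Nat.mul_le_mul_right _ (Nat.mul_le_mul hι₁ hι₂)) ht)
  have hsub' : U₁ ∪ U₂ ∪ ⋃ j, (L ∘ g) j ⊆ U :=
    (Set.union_subset_union_right _
      (Set.iUnion_subset fun j => Set.subset_iUnion L (g j))).trans hsub
  by_cases hab : side₁ a = side₂ b
  · exact ⟨_, h₁.sumElim h₂.not hdisj hK hsub' (by rw [hab]; exact (Bool.not_ne_self _).symm)⟩
  · exact ⟨_, h₁.sumElim h₂ hdisj hK hsub' hab⟩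

end Config

section Clump

variable {V : Type*} {G : SimpleGraph V} {t : ℕ} {D U : Set V}

lemma Clump.exists_isConfig {N : Set V} {q M : ℕ} (ht : M * M * (2 * q) < t)
    (hM : ∀ (ι : Type) [Fintype ι] (D U : Set V) (T : ι → Set V) (side : ι → Bool),
      IsConfig G N q D U T side → Fintype.card ι ≤ M)
    (h : Clump G t D U) (hN : (D ∩ N).Nonempty) :
    ∃ (ι : Type) (_ : Fintype ι) (T : ι → Set V) (side : ι → Bool),
      IsConfig G N q D U T side ∧ (D ∩ N).ncard ≤ Fintype.card ι := by
  induction h with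
  | @single v U hv hU =>
    have hvU : {v} ⊆ U := Set.singleton_subset_iff.2 hv
    refine ⟨Unit, inferInstance, _, fun _ => true,
      ⟨.of_connectedSet hU hvU (hN.mono (Set.inter_subset_inter_left N hvU)),
        fun h => absurd h (not_nontrivial Unit)⟩, ?_⟩
    rw [Fintype.card_unit, ← Set.ncard_singleton v]
    exact Set.ncard_le_ncard Set.inter_subset_left
  | @merge D₁ U₁ D₂ U₂ U L h₁ h₂ hdisj hL hsub _ ih₁ ih₂ =>
    have : Nonempty (Fin t) := ⟨⟨0, Nat.zero_lt_of_lt ht⟩⟩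
    rw [Set.union_inter_distrib_right] at hN ⊢
    rcases (D₁ ∩ N).eq_empty_or_nonempty with hN₁ | hN₁
    · rw [hN₁, Set.empty_union] at hN ⊢
      obtain ⟨ι, _, T, side, hT, hcard⟩ := ih₂ hN
      obtain ⟨T', hT'⟩ := hT.exists_absorb (U := U) hL.symm h₁.conn h₁.subset hdisj.symm
        (by rwa [Set.union_comm U₂])
      exact ⟨ι, _, T', side, Set.union_comm D₁ D₂ ▸ hT', hcard⟩
    obtain ⟨ι₁, _, T₁, side₁, hT₁, hcard₁⟩ := ih₁ hN₁
    rcases (D₂ ∩ N).eq_empty_or_nonempty with hN₂ | hN₂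
    · obtain ⟨T', hT'⟩ := hT₁.exists_absorb hL h₂.conn h₂.subset hdisj hsub
      exact ⟨ι₁, _, T', side₁, hT', by rwa [hN₂, Set.union_empty]⟩
    · obtain ⟨ι₂, _, T₂, side₂, hT₂, hcard₂⟩ := ih₂ hN₂
      obtain ⟨side, hT⟩ := hT₁.exists_merge ht (hM _ _ _ _ _ hT₁) (hM _ _ _ _ _ hT₂) hT₂ hdisj hL
        hsub
      refine ⟨ι₁ ⊕ ι₂, inferInstance, _, side, hT, ?_⟩
      rw [Fintype.card_sum]
      exact (Set.ncard_union_le _ _).trans (add_le_add hcard₁ hcard₂)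

lemma exists_side_forall_notMem {ι : Type*} [Fintype ι] {T : ι → Set V}
    (hT : Pairwise fun i i' => Disjoint (T i) (T i')) (side : ι → Bool) (x : V) {l : ℕ}
    (hl : 2 * l < Fintype.card ι) :
    ∃ (b : Bool) (e : Fin l ↪ ι), ∀ j, side (e j) = b ∧ x ∉ T (e j) := by
  classical
  have hx : (Finset.univ.filter fun i => ¬ x ∉ T i).card ≤ 1 := by
    refine Finset.card_le_one.2 fun i hi i' hi' => by_contra fun hne => ?_
    exact Set.disjoint_left.1 (hT hne) (not_not.1 (Finset.mem_filter.1 hi).2)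
      (not_not.1 (Finset.mem_filter.1 hi').2)
  have hcard := Finset.card_filter_add_card_filter_not (s := Finset.univ) fun i => x ∉ T i
  obtain ⟨b, -, hb⟩ := Finset.exists_le_card_fiber_of_mul_le_card_of_maps_to
    (s := Finset.univ.filter fun i => x ∉ T i) (f := side) (n := l)
    (fun _ _ => Finset.mem_univ _) Finset.univ_nonempty
    (by rw [Finset.card_univ, Fintype.card_bool]; rw [Finset.card_univ] at hcard; lia)
  rw [Finset.filter_filter] at hb
  obtain ⟨e⟩ := Function.Embedding.nonempty_of_card_le (α := Fin l)
    (β := ↥(Finset.univ.filter fun i => x ∉ T i ∧ side i = b))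
    (by rwa [Fintype.card_coe, Fintype.card_fin])
  exact ⟨b, e.trans (.subtype _), fun j => (Finset.mem_filter.1 (e j).2).2.symm⟩

lemma exists_succAbove_notMem {k : ℕ} {L : Fin (k + 1) → Set V}
    (hL : Pairwise fun j j' => Disjoint (L j) (L j')) (x : V) :
    ∃ j₀ : Fin (k + 1), ∀ j, x ∉ L (j₀.succAbove j) := by
  by_cases h : ∃ j₀, x ∈ L j₀
  · obtain ⟨j₀, hj₀⟩ := h
    exact ⟨j₀, fun j hj => Set.disjoint_left.1 (hL (Fin.succAbove_ne j₀ j)) hj hj₀⟩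
  · exact ⟨0, fun j hj => h ⟨_, hj⟩⟩

/-- The centres of the stars are `l` blocks of the same side, and `x` together with all blocks of
the other side forms the dominant vertex. -/
lemma IsConfig.isMinor_Hlk {ι : Type*} [Fintype ι] {l k : ℕ} (hl : 0 < l) {x : V} {T : ι → Set V}
    {side : ι → Bool} (h : IsConfig G (G.neighborSet x) (k + 1) D U T side)
    (hcard : 2 * l < Fintype.card ι) : IsMinor (Hlk l k) G := by
  obtain ⟨L, hL⟩ := h.exists_leaves (Fintype.one_lt_card_iff_nontrivial.1 (by lia))
  obtain ⟨b, e, he⟩ := exists_side_forall_notMem h.disj side x hcard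
  choose j₀ hj₀ using fun i => exists_succAbove_notMem
    (fun j j' hj => hL.disj i j i j' fun heq => hj (Prod.mk.inj heq).2) x
  let X : Set V := {x} ∪ ⋃ i ∈ {i | side i ≠ b}, T i
  have hxT (i) : Touch G {x} (T i) := by
    obtain ⟨y, hy, hxy⟩ := h.meets i
    exact ⟨x, rfl, y, hy, hxy⟩
  have hdisjX {s : Set V} (hx : x ∉ s) (hs : ∀ i, side i ≠ b → Disjoint (T i) s) :
      Disjoint X s := by
    rw [Set.disjoint_union_left, Set.disjoint_singleton_left]
    exact ⟨hx, Set.disjoint_iUnion₂_left.2 hs⟩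
  have hLX := hL.reindex (R' := fun _ => X) e.injective
    (fun i => Fin.succAbove_right_injective (p := j₀ (e i))) subset_rfl (fun i => by
      rw [oppositeBlocks, (he i).1]
      exact Set.subset_union_right)
  refine isMinor_Hlk_of_isLeafFamily
    ((connectedSet_singleton x).union_biUnion (fun i _ => h.conn i) fun i _ => hxT i)
    (fun i => h.conn (e i)) (h.disj.comp_of_injective e.injective)
    (fun i => hdisjX (he i).2 fun i' hi' => h.disj fun heq => hi' (heq ▸ (he i).1))
    (fun i => (hxT (e i)).mono Set.subset_union_left subset_rfl) hLX
    fun i j => hdisjX (hj₀ (e i) j) fun i' _ => (hL.disj_block _ _ _).symm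

lemma Clump.ncard_inter_neighborSet_le {l k : ℕ} (hl : 0 < l) (hG : ¬ IsMinor (Hlk l k) G)
    (ht : 2 * l * (2 * l) * (2 * (k + 1)) < t) (h : Clump G t D U) (x : V) :
    (D ∩ G.neighborSet x).ncard ≤ 2 * l := by
  have hM (ι : Type) [Fintype ι] (D U : Set V) (T : ι → Set V) (side : ι → Bool)
      (hT : IsConfig G (G.neighborSet x) (k + 1) D U T side) : Fintype.card ι ≤ 2 * l := by
    by_contra! hcard
    exact hG (hT.isMinor_Hlk hl hcard)
  rcases (D ∩ G.neighborSet x).eq_empty_or_nonempty with hN | hN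
  · rw [hN, Set.ncard_empty]
    exact Nat.zero_le _
  · obtain ⟨ι, _, T, side, hT, hcard⟩ := h.exists_isConfig ht hM hN
    exact hcard.trans (hM ι D U T side hT)

end Clump

/-! ### Colouring -/

/-- A model of `G'` in `G` whose branch sets are the territories `U i` of clumps `D i`, and in which
every edge of `G'` is witnessed by an edge of `G` between the clumps themselves. -/
structure ClumpModel {V ι : Type*} (G : SimpleGraph V) (t : ℕ) (G' : SimpleGraph ι)
    (D U : ι → Set V) : Prop where
  clump : ∀ i, Clump G t (D i) (U i)
  disj : Pairwise fun i j => Disjoint (U i) (U j)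
  touch : ∀ i j, G'.Adj i j → Touch G (D i) (D j)

namespace ClumpModel

variable {V ι κ : Type*} {G : SimpleGraph V} {t : ℕ} {G' : SimpleGraph ι} {D U : ι → Set V}

lemma isMinor (h : ClumpModel G t G' D U) : IsMinor G' G :=
  .of_connectedSet U (fun i => (h.clump i).conn) h.disj fun i j hij =>
    Touch.mono (h.touch i j hij) (h.clump i).subset (h.clump j).subset

lemma disjoint_clump (h : ClumpModel G t G' D U) : Pairwise fun i j => Disjoint (D i) (D j) :=
  fun i j hij => (h.disj hij).mono (h.clump i).subset (h.clump j).subset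

lemma comp_hom (h : ClumpModel G t G' D U) {A : SimpleGraph κ} (f : A →g G')
    (hf : Function.Injective f) : ClumpModel G t A (D ∘ f) (U ∘ f) where
  clump _ := h.clump _
  disj := h.disj.comp_of_injective hf
  touch _ _ hij := h.touch _ _ (f.map_adj hij)

lemma connectedSet_biUnion (h : ClumpModel G t G' D U) {S : Set ι} (hS : ConnectedSet G' S) :
    ConnectedSet G (⋃ i ∈ S, U i) :=
  hS.biUnion (fun i _ => (h.clump i).conn) fun i _ j _ hij =>
    Touch.mono (h.touch i j hij) (h.clump i).subset (h.clump j).subset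

lemma isConnector_biUnion (h : ClumpModel G t G' D U) {β : Type*} {s : ι} {S P : Set ι}
    (hS : S.Nonempty) {e : β → ι} (he : Function.Injective e) (hs : ∀ j, G'.Adj (e j) s)
    (hadj : ∀ j, ∀ i ∈ S, G'.Adj (e j) i) (hP : ∀ j, e j ∉ P) :
    IsConnector G (U ∘ e) (D s) (U s) (⋃ i ∈ S, D i) (⋃ i ∈ S ∪ P, U i) where
  conn j := (h.clump (e j)).conn
  disj := h.disj.comp_of_injective he
  disj_left j := h.disj (hs j).ne
  disj_right j := by
    refine Set.disjoint_iUnion₂_right.2 fun i hi => h.disj ?_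
    rintro rfl
    exact hi.elim (fun hi => (hadj j _ hi).ne rfl) (hP j)
  touch_left j := Touch.mono (h.touch _ _ (hs j)) (h.clump (e j)).subset subset_rfl
  touch_right j := by
    obtain ⟨i, hi⟩ := hS
    exact Touch.mono (h.touch _ _ (hadj j i hi)) (h.clump (e j)).subset
      (Set.subset_biUnion_of_mem (u := D) hi)

lemma clump_biUnion (h : ClumpModel G t G' D U) (ht : 0 < t) {S : Finset ι} (hS : S.Nonempty)
    {P : Finset ι} (hcard : S.card * t ≤ P.card) (hadj : ∀ p ∈ P, ∀ s ∈ S, G'.Adj p s) :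
    Clump G t (⋃ s ∈ S, D s) (⋃ i ∈ (S ∪ P : Set ι), U i) := by
  classical
  have hconn {S P : Finset ι} (hS : S.Nonempty) (hcard : S.card * t ≤ P.card)
      (hadj : ∀ p ∈ P, ∀ s ∈ S, G'.Adj p s) : ConnectedSet G (⋃ i ∈ (S ∪ P : Set ι), U i) :=
    h.connectedSet_biUnion <| connectedSet_union_of_forall_adj hS
      (Finset.card_pos.1 ((Nat.mul_pos hS.card_pos ht).trans_le hcard)) hadj
  induction hS using Finset.Nonempty.cons_induction generalizing P with
  | singleton s =>
    refine .mono (U := U s) ?_ (Set.subset_biUnion_of_mem (u := U) (Or.inl (by simp)))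
      (hconn (Finset.singleton_nonempty s) hcard hadj)
    simpa using h.clump s
  | cons s S hs hS ih =>
    have hadj' : ∀ p ∈ P, G'.Adj p s ∧ ∀ i ∈ S, G'.Adj p i := fun p hp =>
      ⟨hadj p hp s (Finset.mem_cons_self s S), fun i hi => hadj p hp i (Finset.mem_cons_of_mem hi)⟩
    have hU := hconn (Finset.cons_nonempty hs) hcard hadj
    rw [Finset.card_cons, add_one_mul] at hcard
    obtain ⟨P', hP', hcard'⟩ := Finset.exists_subset_card_eq (le_of_add_le_left hcard)
    obtain ⟨e⟩ := Function.Embedding.nonempty_of_card_le (α := Fin t) (β := ↥(P \ P')) (by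
      rw [Fintype.card_fin, Fintype.card_coe, Finset.card_sdiff_of_subset hP']; lia)
    have he (j : Fin t) : (e j).1 ∈ P ∧ (e j).1 ∉ P' := Finset.mem_sdiff.1 (e j).2
    have hL := h.isConnector_biUnion (s := s) (S := S) (P := P') hS
      (Subtype.val_injective.comp e.injective) (fun j => (hadj' _ (he j).1).1)
      (fun j => (hadj' _ (he j).1).2) fun j => (he j).2
    rw [Finset.cons_eq_insert, Finset.set_biUnion_insert, ← Finset.cons_eq_insert s S hs]
    refine .merge (h.clump s) (ih hcard'.ge fun p hp => (hadj' p (hP' hp)).2) ?_ hL ?_ hU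
    · refine Set.disjoint_iUnion₂_right.2 fun i hi => h.disj ?_
      rintro rfl
      exact hi.elim hs fun hi => (hadj' _ (hP' hi)).1.ne rfl
    · refine Set.union_subset (Set.union_subset ?_ (Set.biUnion_subset_biUnion_left ?_)) ?_
      · exact Set.subset_biUnion_of_mem (u := U) (Or.inl (Finset.mem_cons_self s S))
      · exact Set.union_subset_union (fun i hi => Finset.mem_cons_of_mem hi) hP'
      · exact Set.iUnion_subset fun j => Set.subset_biUnion_of_mem (u := U) (Or.inr (he j).1)

lemma optionElim (h : ClumpModel G t G' D U) {D₀ U₀ : Set V} (h₀ : Clump G t D₀ U₀)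
    (hdisj : ∀ i, Disjoint U₀ (U i)) {A : SimpleGraph (Option ι)}
    (htouch : ∀ a b, A.Adj a b → Touch G (a.elim D₀ D) (b.elim D₀ D)) :
    ClumpModel G t A (fun a => a.elim D₀ D) (fun a => a.elim U₀ U) where
  clump
    | none => h₀
    | some i => h.clump i
  disj
    | none, none, hne => absurd rfl hne
    | none, some i, _ => hdisj i
    | some i, none, _ => (hdisj i).symm
    | some _, some _, hne => h.disj fun heq => hne (congrArg some heq)
  touch := htouch

lemma exists_merge {ι : Type u} [Finite ι] {G' : SimpleGraph ι} {D U : ι → Set V}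
    (h : ClumpModel G t G' D U) (ht : 0 < t) {S B : Finset ι} (hS : S.Nonempty)
    (hcard : S.card * t ≤ B.card) (hadj : ∀ b ∈ B, ∀ s ∈ S, G'.Adj b s) :
    ∃ (κ : Type u) (f : ↥(B : Set ι)ᶜ → κ) (A : SimpleGraph κ) (E T : κ → Set V),
      Finite κ ∧ Nat.card κ < Nat.card ι ∧ ClumpModel G t A E T ∧ (∀ i, D i.1 ⊆ E (f i)) ∧
        (∀ i j, (G'.induce (B : Set ι)ᶜ).Adj i j → f i = f j ∨ A.Adj (f i) (f j)) ∧
          ∃ a, ∀ i, i.1 ∈ S → f i = a := by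
  classical
  let f (i : ↥(B : Set ι)ᶜ) : Option {i // i ∉ S ∧ i ∉ B} :=
    if hi : i.1 ∈ S then none else some ⟨i, hi, i.2⟩
  obtain ⟨x, hx⟩ := hS
  obtain ⟨b, hb⟩ := Finset.card_pos.1 <|
    (Nat.mul_pos (Finset.card_pos.2 ⟨x, hx⟩) ht).trans_le hcard
  have hSB {s : ι} (hs : s ∈ S) : s ∉ B := fun hsB => (hadj s hsB s hs).ne rfl
  have hf : Function.Surjective f
    | none => ⟨⟨x, hSB hx⟩, dif_pos hx⟩
    | some i => ⟨⟨i, i.2.2⟩, dif_neg i.2.1⟩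
  have hD (i : ↥(B : Set ι)ᶜ) :
      D i ⊆ (f i).elim (⋃ s ∈ S, D s) fun i : {i // i ∉ S ∧ i ∉ B} => D i := by
    by_cases hi : i.1 ∈ S
    · rw [show f i = none from dif_pos hi]
      exact Set.subset_biUnion_of_mem (u := D) hi
    · rw [show f i = some ⟨i, hi, i.2⟩ from dif_neg hi]
      exact subset_rfl
  refine ⟨_, f, (G'.induce (B : Set ι)ᶜ).map f, _, _, .of_surjective f hf,
    (Nat.card_le_card_of_surjective f hf).trans_lt (Finite.card_subtype_lt (not_not.2 hb)),
    (h.comp_hom (Embedding.comap (.subtype fun i => i ∉ S ∧ i ∉ B) G').toHom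
      Subtype.val_injective).optionElim (h.clump_biUnion ht ⟨x, hx⟩ hcard hadj) (fun i => ?_) ?_,
    hD, fun i j hij => ?_, none, fun i hi => dif_pos hi⟩
  · refine Set.disjoint_iUnion₂_left.2 fun j hj => h.disj ?_
    rintro rfl
    exact hj.elim i.2.1 i.2.2
  · rintro _ _ ⟨-, i, j, hij, rfl, rfl⟩
    exact Touch.mono (h.touch _ _ hij) (hD i) (hD j)
  · exact or_iff_not_imp_left.2 fun hne => ⟨hne, i, j, hij, rfl, rfl⟩

end ClumpModel

/-- A `2`-colouring that is constant on the clumps `D i` and in which every vertex of a clump has at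
most `K` neighbours of its own colour in that clump and the adjacent ones. Vertices outside the
clumps and edges of `G` between clumps not adjacent in `G'` are disregarded. -/
structure IsClumpColouring {V ι : Type*} (G : SimpleGraph V) (K : ℕ) (G' : SimpleGraph ι)
    (D : ι → Set V) (c : V → Bool) : Prop where
  const : ∀ i, ∀ v ∈ D i, ∀ w ∈ D i, c v = c w
  defect : ∀ i, ∀ v ∈ D i,
    {w | G.Adj v w ∧ c w = c v ∧ ∃ j, w ∈ D j ∧ (j = i ∨ G'.Adj i j)}.ncard ≤ K

/-- The subgraph formed by the edges that have an end of degree more than `d`. -/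
def heavySubgraph {W : Type*} [Fintype W] (G : SimpleGraph W) (d : ℕ) : SimpleGraph W where
  Adj u v := G.Adj u v ∧ (d < degreeIn G Finset.univ u ∨ d < degreeIn G Finset.univ v)
  symm := ⟨fun _ _ h => ⟨h.1.symm, h.2.symm⟩⟩
  loopless := ⟨fun _ h => h.1.ne rfl⟩

section Colouring

variable {V ι κ : Type*} {G : SimpleGraph V} {t K : ℕ} {G' : SimpleGraph ι} {D U : ι → Set V}
  {c : V → Bool}

lemma heavySubgraph_le [Fintype ι] (G' : SimpleGraph ι) (d : ℕ) : heavySubgraph G' d ≤ G' :=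
  fun _ _ h => h.1

lemma degreeIn_heavySubgraph [Fintype ι] {d : ℕ} {i : ι} (hi : d < degreeIn G' Finset.univ i) :
    degreeIn (heavySubgraph G' d) Finset.univ i = degreeIn G' Finset.univ i := by
  classical
  refine congrArg Finset.card (Finset.filter_congr fun j _ => ?_)
  exact ⟨And.left, fun hij => ⟨hij, Or.inl hi⟩⟩

lemma lt_degreeIn_or_of_heavySubgraph_adj [Fintype ι] {d : ℕ} {i j : ι}
    (h : (heavySubgraph G' d).Adj i j) : d < degreeIn (heavySubgraph G' d) Finset.univ i ∨
      d < degreeIn (heavySubgraph G' d) Finset.univ j :=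
  h.2.imp (fun hi => hi.trans_eq (degreeIn_heavySubgraph hi).symm)
    fun hj => hj.trans_eq (degreeIn_heavySubgraph hj).symm

lemma ncard_neighbors_le_of_degreeIn_le [Finite V] [Fintype ι] {d m : ℕ} {v : V}
    (hm : ∀ j, (D j ∩ G.neighborSet v).ncard ≤ m) {i : ι} (hi : degreeIn G' Finset.univ i ≤ d) :
    {w | G.Adj v w ∧ ∃ j, w ∈ D j ∧ (j = i ∨ G'.Adj i j)}.ncard ≤ (d + 1) * m := by
  classical
  let F := insert i (Finset.univ.filter (G'.Adj i))
  have hF : F.card ≤ d + 1 := (Finset.card_insert_le _ _).trans (Nat.add_le_add_right hi 1)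
  calc
    _ ≤ (⋃ j ∈ F, D j ∩ G.neighborSet v).ncard := by
      refine Set.ncard_le_ncard ?_
      rintro w ⟨hvw, j, hwj, hij⟩
      exact Set.mem_biUnion (x := j) (by simpa [F] using hij) ⟨hwj, hvw⟩
    _ ≤ ∑ j ∈ F, (D j ∩ G.neighborSet v).ncard := Finset.set_ncard_biUnion_le _ _
    _ ≤ F.card * m := Finset.sum_le_card_nsmul _ _ _ fun j _ => hm j
    _ ≤ (d + 1) * m := Nat.mul_le_mul_right m hF

namespace IsClumpColouring

lemma comap [Finite V] {E : κ → Set V} {A : SimpleGraph κ} (h : IsClumpColouring G K A E c)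
    (f : ι → κ) (hD : ∀ i, D i ⊆ E (f i))
    (hf : ∀ i j, G'.Adj i j → f i = f j ∨ A.Adj (f i) (f j)) : IsClumpColouring G K G' D c where
  const i v hv w hw := h.const (f i) v (hD i hv) w (hD i hw)
  defect i v hv := by
    refine (Set.ncard_le_ncard ?_).trans (h.defect (f i) v (hD i hv))
    rintro w ⟨hvw, hcw, j, hwj, rfl | hij⟩
    · exact ⟨hvw, hcw, f j, hD j hwj, Or.inl rfl⟩
    · exact ⟨hvw, hcw, f j, hD j hwj, (hf i j hij).imp_left Eq.symm⟩

lemma of_heavySubgraph [Finite V] [Fintype ι] {d m : ℕ}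
    (hm : ∀ i v, (D i ∩ G.neighborSet v).ncard ≤ m)
    (h : IsClumpColouring G ((d + 1) * m) (heavySubgraph G' d) D c) :
    IsClumpColouring G ((d + 1) * m) G' D c where
  const := h.const
  defect i v hv := by
    rcases le_or_gt (degreeIn G' Finset.univ i) d with hi | hi
    · refine (Set.ncard_le_ncard ?_).trans (ncard_neighbors_le_of_degreeIn_le (hm · v) hi)
      exact fun w ⟨hvw, _, hw⟩ => ⟨hvw, hw⟩
    · refine (Set.ncard_le_ncard ?_).trans (h.defect i v hv)
      exact fun w ⟨hvw, hcw, j, hwj, hij⟩ =>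
        ⟨hvw, hcw, j, hwj, hij.imp_right fun hij => ⟨hij, Or.inl hi⟩⟩

lemma exists_recolour [Finite V] {B : Set ι} {b : Bool}
    (h : IsClumpColouring G K (G'.induce Bᶜ) (fun i => D i) c)
    (hD : Pairwise fun i j => Disjoint (D i) (D j))
    (hB : ∀ i ∈ B, ∀ j, G'.Adj i j → j ∉ B ∧ ∀ v ∈ D j, c v = b)
    (hK : ∀ i ∈ B, ∀ v, (D i ∩ G.neighborSet v).ncard ≤ K) :
    ∃ c', IsClumpColouring G K G' D c' := by
  classical
  let c' v := if v ∈ ⋃ i ∈ B, D i then !b else c v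
  have hin {i : ι} {v : V} (hi : i ∈ B) (hv : v ∈ D i) : c' v = !b :=
    if_pos (Set.mem_biUnion hi hv)
  have hout {i : ι} {v : V} (hi : i ∉ B) (hv : v ∈ D i) : c' v = c v := by
    refine if_neg fun hv' => ?_
    obtain ⟨j, hj, hvj⟩ := Set.mem_iUnion₂.1 hv'
    exact Set.disjoint_left.1 (hD (ne_of_mem_of_not_mem hj hi).symm) hv hvj
  refine ⟨c', fun i v hv w hw => ?_, fun i v hv => ?_⟩
  · by_cases hi : i ∈ B
    · rw [hin hi hv, hin hi hw]
    · rw [hout hi hv, hout hi hw]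
      exact h.const ⟨i, hi⟩ v hv w hw
  by_cases hi : i ∈ B
  · refine (Set.ncard_le_ncard ?_).trans (hK i hi v)
    rintro w ⟨hvw, hcw, j, hwj, rfl | hij⟩
    · exact ⟨hwj, hvw⟩
    · obtain ⟨hj, hcj⟩ := hB i hi j hij
      rw [hin hi hv, hout hj hwj, hcj w hwj] at hcw
      exact absurd hcw.symm (Bool.not_ne_self b)
  · refine (Set.ncard_le_ncard ?_).trans (h.defect ⟨i, hi⟩ v hv)
    rintro w ⟨hvw, hcw, j, hwj, hij⟩
    have hj : j ∉ B := fun hj => by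
      rcases hij with rfl | hij
      · exact hi hj
      · rw [hin hj hwj, hout hi hv, (hB j hj i hij.symm).2 v hv] at hcw
        exact Bool.not_ne_self b hcw
    rw [hout hj hwj, hout hi hv] at hcw
    exact ⟨hvw, hcw, ⟨j, hj⟩, hwj, hij.imp_left Subtype.ext⟩

end IsClumpColouring

lemma ClumpModel.exists_isClumpColouring_of_merge [Finite V] {ι : Type u} [Finite ι]
    {G' : SimpleGraph ι} {D U : ι → Set V} (h : ClumpModel G t G' D U) (ht : 0 < t)
    (hK : ∀ i v, (D i ∩ G.neighborSet v).ncard ≤ K) {S B : Finset ι} (hS : S.Nonempty)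
    (hcard : S.card * t ≤ B.card) (hadj : ∀ b ∈ B, ∀ w, G'.Adj b w ↔ w ∈ S)
    (hcol : ∀ (κ : Type u) [Finite κ] (A : SimpleGraph κ) (E T : κ → Set V),
      Nat.card κ < Nat.card ι → ClumpModel G t A E T → ∃ c, IsClumpColouring G K A E c) :
    ∃ c, IsClumpColouring G K G' D c := by
  obtain ⟨κ, f, A, E, T, _, hκ, hA, hD, hf, a, ha⟩ :=
    h.exists_merge ht hS hcard fun b hb s => (hadj b hb s).2
  obtain ⟨c, hc⟩ := hcol κ A E T hκ hA
  have hSB {s : ι} (hs : s ∈ S) : s ∉ B := fun hsB => ((hadj s hsB s).2 hs).ne rfl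
  obtain ⟨b, hb⟩ : ∃ b, ∀ v ∈ E a, c v = b := by
    rcases (E a).eq_empty_or_nonempty with hE | ⟨x, hx⟩
    · exact ⟨true, by simp [hE]⟩
    · exact ⟨c x, fun v hv => hc.const a v hv x hx⟩
  refine (hc.comap f hD hf).exists_recolour (b := b) h.disjoint_clump (fun i hi j hij => ?_)
    fun i _ => hK i
  have hj := (hadj i hi j).1 hij
  have hDE := hD ⟨j, hSB hj⟩
  rw [ha _ hj] at hDE
  exact ⟨hSB hj, fun v hv => hb v (hDE hv)⟩

theorem ClumpModel.exists_isClumpColouring [Finite V] {l k δ d : ℕ} (hl : 0 < l)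
    (hG : ¬ IsMinor (Hlk l k) G) (ht : 2 * l * (2 * l) * (2 * (k + 1)) < t)
    (hδ : δ = 2 * (l * (k + 1))) (hd : δ * (2 ^ δ * ((δ + 1) * t) + δ + 2) ≤ d + 1)
    {ι : Type u} [Finite ι] {G' : SimpleGraph ι} {D U : ι → Set V} (h : ClumpModel G t G' D U) :
    ∃ c, IsClumpColouring G ((d + 1) * (2 * l)) G' D c := by
  induction hn : Nat.card ι using Nat.strong_induction_on generalizing ι with
  | _ n ih =>
  subst hn
  have := Fintype.ofFinite ι
  have hm i v : (D i ∩ G.neighborSet v).ncard ≤ 2 * l :=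
    (h.clump i).ncard_inter_neighborSet_le hl hG ht v
  have hmK i v : (D i ∩ G.neighborSet v).ncard ≤ (d + 1) * (2 * l) :=
    (hm i v).trans (Nat.le_mul_of_pos_left _ d.succ_pos)
  let A := heavySubgraph G' d
  have hA : ClumpModel G t A D U := h.comp_hom (.ofLE (heavySubgraph_le G' d)) fun _ _ => id
  suffices ∃ c, IsClumpColouring G ((d + 1) * (2 * l)) A D c by
    obtain ⟨c, hc⟩ := this
    exact ⟨c, hc.of_heavySubgraph hm⟩
  rcases isEmpty_or_nonempty ι with hι | hι
  · exact ⟨fun _ => true, isEmptyElim, isEmptyElim⟩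
  by_cases hiso : ∃ i, ∀ j, ¬ A.Adj i j
  · obtain ⟨i, hi⟩ := hiso
    obtain ⟨c, hc⟩ := ih _ (Finite.card_subtype_lt (p := (· ∈ ({i} : Set ι)ᶜ)) (not_not.2 rfl))
      (hA.comp_hom (Embedding.induce _).toHom Subtype.val_injective) rfl
    refine hc.exists_recolour (b := true) h.disjoint_clump ?_ fun i _ => hmK i
    rintro _ rfl j hij
    exact absurd hij (hi j)
  · push Not at hiso
    obtain ⟨S, B, hS, hScard, hBcard, hSB⟩ := exists_common_neighborSet hl
      (fun hminor => hG (hminor.trans hA.isMinor)) hδ hd hiso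
      fun _ _ => lt_degreeIn_or_of_heavySubgraph_adj
    exact hA.exists_isClumpColouring_of_merge (Nat.zero_lt_of_lt ht) hmK hS
      ((Nat.mul_le_mul_right t hScard).trans hBcard) hSB
      fun κ _ A E T hκ hE => ih _ hκ hE rfl

theorem exists_defColorable_two_of_not_isMinor_Hlk {l : ℕ} (k : ℕ) (hl : 0 < l) :
    ∃ d, ∀ (V : Type u) [Finite V] (G : SimpleGraph V), ¬ IsMinor (Hlk l k) G →
      DefColorable G 2 d := by
  let t := 2 * l * (2 * l) * (2 * (k + 1)) + 1
  let δ := 2 * (l * (k + 1))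
  refine ⟨(δ * (2 ^ δ * ((δ + 1) * t) + δ + 2) + 1) * (2 * l), fun V _ G hG => ?_⟩
  have h : ClumpModel G t G (fun v => {v}) (fun v => {v}) :=
    { clump := fun v => .single rfl (connectedSet_singleton v)
      disj := fun _ _ => Set.disjoint_singleton.2
      touch := fun v w hvw => ⟨v, rfl, w, rfl, hvw⟩ }
  obtain ⟨c, hc⟩ := h.exists_isClumpColouring hl hG (Nat.lt_succ_self _) rfl (Nat.le_succ _)
  refine ⟨finTwoEquiv.symm ∘ c, fun v => (Set.ncard_le_ncard ?_).trans (hc.defect v v rfl)⟩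
  exact fun w ⟨hvw, hcw⟩ => ⟨hvw, finTwoEquiv.symm.injective hcw, w, rfl, Or.inr hvw⟩

theorem exists_defColorable_two_of_treeDepth_le_three {α : Type*} [Finite α] {H : SimpleGraph α}
    (h : treeDepth H ≤ 3) (hcomp : ∀ c c' : H.ConnectedComponent,
      treeDepth (H.induce c.supp) = 3 → treeDepth (H.induce c'.supp) = 3 → c = c') :
    ∃ d, ∀ (V : Type u) [Finite V] (G : SimpleGraph V), ¬ IsMinor H G → DefColorable G 2 d := by
  obtain ⟨X, p, hX, hp⟩ := exists_subsingleton_isStarMap h hcomp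
  obtain ⟨n, ⟨e⟩⟩ := Finite.exists_equiv_fin α
  obtain ⟨d, hd⟩ := exists_defColorable_two_of_not_isMinor_Hlk n n.succ_pos
  exact ⟨d, fun V _ G hG => hd V G fun hminor => hG <|
    (hp.isMinor_Hlk hX (e.toEmbedding.trans Fin.castSuccEmb) e.toEmbedding).trans hminor⟩

end Colouring

/-- Let `H` be a finite simple graph with tree-depth exactly 3 such that at most one connected
component of `H` has tree-depth 3. Then the defective chromatic number of the class of
`H`-minor-free graphs equals 2: some `d` works with 2 colours, and no `d` works with 1 colour. -/
theorem stmt17 {α : Type} [Fintype α] (H : SimpleGraph α)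
    (h3 : treeDepth H = 3)
    (hcomp : ∀ c c' : H.ConnectedComponent,
      treeDepth (H.induce c.supp) = 3 → treeDepth (H.induce c'.supp) = 3 → c = c') :
    (∃ d : ℕ, ∀ (V : Type) [Fintype V] (G : SimpleGraph V),
        ¬ IsMinor H G → DefColorable G 2 d) ∧
    (∀ d : ℕ, ∃ (W : Type) (_ : Fintype W) (G : SimpleGraph W),
        ¬ IsMinor H G ∧ ¬ DefColorable G 1 d) := by
  obtain ⟨d, hd⟩ := exists_defColorable_two_of_treeDepth_le_three h3.le hcomp
  exact ⟨⟨d, fun V _ => hd V⟩, exists_not_isMinor_not_defColorable_one (by lia)⟩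
end

section
/- There is an absolute constant c such that the following holds: for all integers ℓ ≥ 2 and k ≥ 1, let H_{ℓ,k} be the graph obtained from the disjoint union of ℓ copies of the star K_{1,k} by adding one new vertex adjacent to all other vertices; then every finite simple graph with no H_{ℓ,k} minor is (2, ⌈c·ℓ¹⁰·k³⌉)-colourable. -/
/-!
Contracting a connected set `A` makes its boundary adjacent to a single vertex. If `l` vertices
outside `A` each have `T = l * (k + 2)` neighbours in that boundary, then Hall's theorem gives them
disjoint stars there, and these form the excluded minor together with `A`.

In a connected graph, take the layers of vertices at equal distance from a root. Applied to balls
around the root, to single vertices, and to balls with some vertices of their last layer removed,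
this shows that all but `O(l ^ 2)` vertices `v` of each layer are tame: `v` has at most `T`
neighbours in its own and in the previous layer, shares at most `T` of its neighbours in the next
layer, its children, with any one later vertex, and shares `O(l * T)` of them with its own layer.
For the last property, suppose that `2 * l` vertices of a layer violate it. By Ore's domination
argument at least half of them have many children in common with the rest of the layer, and
removing this half from the ball leaves a connected set.

Colour the wild vertices `0` and their other neighbours `1`, and let any other vertex differ from
its parent. A neighbour of a wild vertex with the same colour is wild, so it is one of `O(l ^ 2)`
wild vertices in three layers. For a tame vertex `v`, the wild neighbours, the neighbours in its own
and the previous layer, and the children shared with its layer are few. Any other child has parent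
`v`, so it differs from `v` unless it is adjacent to a wild vertex in one of the next two
layers; there are `O(l ^ 2)` of these, each sharing at most `T` children with `v`. Altogether the
defect is `O(l ^ 2 * T) = O(l ^ 3 * k)`.
-/

open SimpleGraph

universe u v

section Encard

variable {ι : Type u} {α : Type v}

lemma encard_biUnion_le_mul {s : Set ι} {f : ι → Set α} {m : ℕ} {n : ℕ∞}
    (hs : s.encard ≤ m) (hf : ∀ i ∈ s, (f i).encard ≤ n) :
    (⋃ i ∈ s, f i).encard ≤ m * n := by
  lift s to Finset ι using Set.finite_of_encard_le_coe hs
  rw [Set.encard_coe_eq_coe_finsetCard] at hs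
  calc (⋃ i ∈ s, f i).encard ≤ ∑ i ∈ s, (f i).encard := s.set_encard_biUnion_le f
    _ ≤ s.card • n := Finset.sum_le_card_nsmul s _ n hf
    _ ≤ m * n := by rw [nsmul_eq_mul]; gcongr

lemma exists_injective_of_card_le_encard [Fintype ι] {t : ι → Set α}
    (ht : ∀ i, (Fintype.card ι : ℕ∞) ≤ (t i).encard) :
    ∃ f : ι → α, Function.Injective f ∧ ∀ i, f i ∈ t i := by
  classical
  have hsub : ∀ i, ∃ s : Finset α, (s : Set α) ⊆ t i ∧ s.card = Fintype.card ι := by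
    intro i
    obtain ⟨s, hst, hs⟩ := Set.exists_subset_encard_eq (ht i)
    lift s to Finset α using Set.finite_of_encard_eq_coe hs
    exact ⟨s, hst, by simpa using hs⟩
  choose s hst hs using hsub
  have hall : ∀ I : Finset ι, I.card ≤ (I.biUnion s).card := by
    intro I
    obtain rfl | ⟨i, hi⟩ := I.eq_empty_or_nonempty
    · simp
    · calc I.card ≤ (s i).card := hs i ▸ I.card_le_univ
        _ ≤ (I.biUnion s).card := Finset.card_le_card (Finset.subset_biUnion_of_mem s hi)
  obtain ⟨f, hinj, hf⟩ := (Finset.all_card_le_biUnion_card_iff_exists_injective s).1 hall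
  exact ⟨f, hinj, fun i => hst i (hf i)⟩

end Encard

section Minor

variable {V : Type u} {α : Type v} {G : SimpleGraph V}

lemma IsMinor.map {W : Type*} {G' : SimpleGraph W} {H : SimpleGraph α} (h : IsMinor H G)
    (f : G →g G') (hf : Function.Injective f) : IsMinor H G' := by
  obtain ⟨B, hne, hconn, hdisj, hadj⟩ := h
  refine ⟨fun a => f '' B a, fun a => (hne a).image f, fun a => ?_,
    fun a b hab => (Set.disjoint_image_iff hf).2 (hdisj hab), fun a b hab => ?_⟩
  · let φ : G.induce (B a) →g G'.induce (f '' B a) :=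
      ⟨fun x => ⟨f x, Set.mem_image_of_mem f x.2⟩, fun h => f.map_rel h⟩
    refine (hconn a).map φ ?_
    rintro ⟨-, x, hx, rfl⟩
    exact ⟨⟨x, hx⟩, rfl⟩
  · obtain ⟨x, hx, y, hy, hxy⟩ := hadj a b hab
    exact ⟨f x, Set.mem_image_of_mem f hx, f y, Set.mem_image_of_mem f hy, f.map_rel hxy⟩

lemma isMinor_fromRel {r : α → α → Prop} (B : α → Set V)
    (hconn : ∀ a, (G.induce (B a)).Connected) (hdisj : Pairwise fun a b => Disjoint (B a) (B b))
    (hadj : ∀ a b, r a b → ∃ x ∈ B a, ∃ y ∈ B b, G.Adj x y) : IsMinor (fromRel r) G := by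
  refine ⟨B, fun a => Set.nonempty_coe_sort.1 (hconn a).nonempty, hconn, hdisj, ?_⟩
  rintro a b ⟨-, hab | hba⟩
  · exact hadj a b hab
  · obtain ⟨x, hx, y, hy, hxy⟩ := hadj b a hba
    exact ⟨y, hy, x, hx, hxy.symm⟩

/-- The outer vertex boundary of `A`: the vertices outside `A` with a neighbour in `A`. They are
the neighbours of the vertex to which a connected `A` contracts. -/
def outerBoundary (G : SimpleGraph V) (A : Set V) : Set V :=
  {z | z ∉ A ∧ ∃ a ∈ A, G.Adj a z}

/-- The branch sets of an `Hlk` minor with dominant branch set `A`, star centres `w` and star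
vertices `f`: the centre of each star absorbs its star vertex number `0`, which lies in the
boundary of `A` and so makes the centre adjacent to `A`. -/
def starBranchSet {l k : ℕ} (A : Set V) (w : Fin l → V) (f : Fin l × Fin (k + 1) → V) :
    Option (Fin l × Fin (k + 1)) → Set V
  | none => A
  | some x => {y | y = f x ∨ x.2 = 0 ∧ y = w x.1}

lemma connected_induce_starBranchSet {l k : ℕ} {A : Set V} (hA : (G.induce A).Connected)
    {w : Fin l → V} {f : Fin l × Fin (k + 1) → V} (hwf : ∀ x, G.Adj (w x.1) (f x))
    (o : Option (Fin l × Fin (k + 1))) : (G.induce (starBranchSet A w f o)).Connected := by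
  rcases o with _ | x
  · exact hA
  · by_cases hx : x.2 = 0
    · have hpair : starBranchSet A w f (some x) = {f x, w x.1} := by
        ext y; simp [starBranchSet, hx]
      rw [hpair]
      exact induce_pair_connected_of_adj (hwf x).symm
    · have hsingle : starBranchSet A w f (some x) = {f x} := by
        ext y; simp [starBranchSet, hx]
      rw [hsingle]
      simp

lemma pairwise_disjoint_starBranchSet {l k : ℕ} {A : Set V} {w : Fin l → V}
    {f : Fin l × Fin (k + 1) → V} (hwA : ∀ j, w j ∉ A) (hw : Function.Injective w)
    (hfA : ∀ x, f x ∉ A) (hf : Function.Injective f) (hfw : ∀ x, f x ∉ Set.range w) :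
    Pairwise fun a b => Disjoint (starBranchSet A w f a) (starBranchSet A w f b) := by
  have hA : ∀ x, ∀ y ∈ starBranchSet A w f (some x), y ∉ A := by
    rintro x y (rfl | ⟨-, rfl⟩)
    exacts [hfA x, hwA x.1]
  rintro (_ | x) (_ | x') hne <;> refine Set.disjoint_left.2 fun y hy hy' => ?_
  · exact hne rfl
  · exact hA x' y hy' hy
  · exact hA x y hy hy'
  · refine hne (congrArg some ?_)
    rcases hy with rfl | ⟨h0, rfl⟩ <;> rcases hy' with h | ⟨h0', h⟩
    · exact hf h
    · exact (hfw x ⟨x'.1, h.symm⟩).elim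
    · exact (hfw x' ⟨x.1, h⟩).elim
    · exact Prod.ext (hw h) (h0.trans h0'.symm)

lemma isMinor_hlk_of_stars {l k : ℕ} {A : Set V} (hA : (G.induce A).Connected) {w : Fin l → V}
    {f : Fin l × Fin (k + 1) → V} (hwA : ∀ j, w j ∉ A) (hw : Function.Injective w)
    (hfA : ∀ x, f x ∈ outerBoundary G A) (hf : Function.Injective f)
    (hfw : ∀ x, f x ∉ Set.range w) (hwf : ∀ x, G.Adj (w x.1) (f x)) : IsMinor (Hlk l k) G := by
  refine isMinor_fromRel (starBranchSet A w f) (connected_induce_starBranchSet hA hwf)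
    (pairwise_disjoint_starBranchSet hwA hw (fun x => (hfA x).1) hf hfw) ?_
  rintro (_ | ⟨i, a⟩) (_ | ⟨j, b⟩) h
  · exact h.elim
  · obtain ⟨-, x, hx, hadj⟩ := hfA (j, b)
    exact ⟨x, hx, f (j, b), Or.inl rfl, hadj⟩
  · exact h.elim
  · obtain ⟨rfl, rfl⟩ := h
    exact ⟨w i, Or.inr ⟨rfl, rfl⟩, f (i, b), Or.inl rfl, hwf (i, b)⟩

/-- For every connected set `A`, fewer than `l` vertices outside `A` have `T` or more neighbours
in the boundary of `A`. This is all that the colouring uses about excluding `Hlk l k`. -/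
def StarBounded (G : SimpleGraph V) (l T : ℕ) : Prop :=
  ∀ A : Set V, (G.induce A).Connected →
    {w | w ∉ A ∧ (T : ℕ∞) ≤ (G.neighborSet w ∩ outerBoundary G A).encard}.encard < l

lemma starBounded_of_not_isMinor {l k : ℕ} (hG : ¬ IsMinor (Hlk l k) G) :
    StarBounded G l (l * (k + 2)) := by
  intro A hA
  by_contra! hl
  obtain ⟨w, hw, hwmem⟩ := exists_injective_of_card_le_encard (ι := Fin l)
    fun _ => by simpa only [Fintype.card_fin] using hl
  have hprivate : ∀ x : Fin l × Fin (k + 1), (Fintype.card (Fin l × Fin (k + 1)) : ℕ∞) ≤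
      ((G.neighborSet (w x.1) ∩ outerBoundary G A) \ Set.range w).encard := by
    intro x
    have hrange : (Set.range w).encard = l := by
      rw [← Set.image_univ, hw.encard_image, Set.encard_univ, ENat.card_eq_coe_fintype_card,
        Fintype.card_fin]
    have h := (hwmem x.1).2.trans
      (Set.encard_le_encard_sdiff_add_encard _ (Set.range w))
    have hT : ((l * (k + 2) : ℕ) : ℕ∞) = (l * (k + 1) : ℕ) + l := by push_cast; ring
    rw [hrange, hT, ENat.add_le_add_iff_right (ENat.natCast_ne_top l)] at h
    simpa using h
  obtain ⟨f, hf, hfmem⟩ := exists_injective_of_card_le_encard hprivate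
  exact hG <| isMinor_hlk_of_stars hA (fun j => (hwmem j).1) hw (fun x => (hfmem x).1.2) hf
    (fun x => (hfmem x).2) fun x => (hfmem x).1.1

lemma StarBounded.pos [Nonempty V] {l T : ℕ} (hG : StarBounded G l T) : 0 < l := by
  inhabit V
  refine Nat.pos_of_ne_zero ?_
  rintro rfl
  simpa using hG {default} (by simp)

end Minor

section Domination

/-- Ore's argument: if `W` is maximal among the subsets of `S` all of whose members have `P` or a
neighbour in `S \ W`, then its complement in `S` has the same property. -/
lemma exists_half_dominated {V : Type u} (F : SimpleGraph V) (P : V → Prop) (S : Finset V)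
    (hS : ∀ v ∈ S, P v ∨ ∃ u ∈ S, F.Adj v u) :
    ∃ W ⊆ S, S.card ≤ 2 * W.card ∧ ∀ v ∈ W, P v ∨ ∃ u ∈ S, u ∉ W ∧ F.Adj v u := by
  classical
  let Dominated : Finset V → Prop := fun W => ∀ v ∈ W, P v ∨ ∃ u ∈ S, u ∉ W ∧ F.Adj v u
  obtain ⟨W, hW⟩ := (S.powerset.filter Dominated).exists_maximal ⟨∅, by simp [Dominated]⟩
  obtain ⟨hWS, hWdom⟩ : W ⊆ S ∧ Dominated W := by simpa using hW.prop
  have hcompl : Dominated (S \ W) := by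
    intro d hd
    by_contra! hcon
    obtain ⟨hdP, hdW⟩ := hcon
    obtain ⟨hdS, hdnW⟩ := Finset.mem_sdiff.1 hd
    have hnotAdj : ∀ w ∈ W, ¬ F.Adj d w := fun w hw => hdW w (hWS hw) (by simp [hw])
    have hinsert : Dominated (insert d W) := by
      intro v hv'
      obtain rfl | hv := Finset.mem_insert.1 hv'
      · obtain ⟨u, huS, hvu⟩ := (hS v hdS).resolve_left hdP
        refine Or.inr ⟨u, huS, fun hu => ?_, hvu⟩
        obtain rfl | hu := Finset.mem_insert.1 hu
        exacts [F.irrefl hvu, hnotAdj u hu hvu]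
      · refine (hWdom v hv).imp_right fun ⟨u, huS, hu, hvu⟩ => ⟨u, huS, fun hu' => ?_, hvu⟩
        obtain rfl | hu' := Finset.mem_insert.1 hu'
        exacts [hnotAdj v hv hvu.symm, hu hu']
    have hle : insert d W ⊆ W := hW.le_of_ge
      (by simpa using ⟨Finset.insert_subset hdS hWS, hinsert⟩) (Finset.subset_insert d W)
    exact hdnW (hle (Finset.mem_insert_self d W))
  have hcard := Finset.card_sdiff_add_card_eq_card hWS
  obtain h | h := le_total W.card (S \ W).card
  · exact ⟨S \ W, Finset.sdiff_subset, by omega, hcompl⟩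
  · exact ⟨W, hWS, by omega, hWdom⟩

end Domination

section Distance

variable {V : Type u} {G : SimpleGraph V} {r : V}

lemma exists_adj_dist_succ_eq (hG : G.Connected) {v : V} (hv : v ≠ r) :
    ∃ p, G.Adj p v ∧ G.dist r p + 1 = G.dist r v := by
  obtain ⟨q, hq⟩ := hG.exists_walk_length_eq_dist v r
  cases q with
  | nil => exact (hv rfl).elim
  | @cons _ p _ hvp q =>
    refine ⟨p, hvp.symm, ?_⟩
    have hp : G.dist p r ≤ q.length := dist_le q
    have hdiff := hvp.diff_dist_adj (u := r)
    rw [Walk.length_cons] at hq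
    rw [dist_comm] at hp hq
    omega

lemma connected_induce_of_dist (hG : G.Connected) {A : Set V} {i : ℕ} (hi : 0 < i)
    (hlt : ∀ v, G.dist r v < i → v ∈ A) (hle : ∀ v ∈ A, G.dist r v ≤ i) :
    (G.induce A).Connected := by
  have hr : r ∈ A := hlt r (by simpa using hi)
  have hreach : ∀ n, ∀ v (hv : v ∈ A), G.dist r v = n →
      (G.induce A).Reachable ⟨r, hr⟩ ⟨v, hv⟩ := by
    intro n
    induction n with
    | zero =>
      intro v hv h
      obtain rfl := hG.dist_eq_zero_iff.1 h
      exact Reachable.refl _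
    | succ n ih =>
      intro v hv h
      have hne : v ≠ r := by
        rintro rfl
        simp at h
      obtain ⟨p, hpv, hp⟩ := exists_adj_dist_succ_eq hG hne
      have hvi := hle v hv
      have hpA : p ∈ A := hlt p (by omega)
      have hadj : (G.induce A).Adj ⟨p, hpA⟩ ⟨v, hv⟩ := hpv
      exact (ih p hpA (by omega)).trans hadj.reachable
  exact (connected_iff_exists_forall_reachable _).2 ⟨⟨r, hr⟩, fun v => hreach _ v v.2 rfl⟩

/-- The vertices at distance `i` from `r`. -/
def layer (G : SimpleGraph V) (r : V) (i : ℕ) : Set V :=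
  {v | G.dist r v = i}

lemma encard_layer_zero_le (hG : G.Connected) (r : V) : (layer G r 0).encard ≤ 1 := by
  refine Set.encard_le_one_iff.2 fun a b ha hb => ?_
  rw [← hG.dist_eq_zero_iff.1 ha, ← hG.dist_eq_zero_iff.1 hb]

/-- The neighbours of `v` one layer further from `r` that have a second neighbour in the layer
of `v`. -/
def sharedChildren (G : SimpleGraph V) (r v : V) : Set V :=
  {z | G.Adj v z ∧ z ∈ layer G r (G.dist r v + 1) ∧
    ∃ w ∈ layer G r (G.dist r v), w ≠ v ∧ G.Adj w z}

/-- A vertex is tame if it has few neighbours in its own and in the previous layer, shares few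
neighbours in the next layer with any single later vertex, and shares few of them with its own
layer. For `v = r` the second condition repeats the first, as `0 - 1 = 0`. -/
structure IsTame (G : SimpleGraph V) (r : V) (l T : ℕ) (v : V) : Prop where
  encard_own_le : (G.neighborSet v ∩ layer G r (G.dist r v)).encard ≤ T
  encard_prev_le : (G.neighborSet v ∩ layer G r (G.dist r v - 1)).encard ≤ T
  encard_common_le : ∀ x, G.dist r v < G.dist r x →
    (G.commonNeighbors v x ∩ layer G r (G.dist r v + 1)).encard ≤ T
  encard_shared_le : (sharedChildren G r v).encard ≤ ((2 * l + 1) * T : ℕ)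

variable {l T : ℕ}

lemma encard_many_in_layer_lt (hG : G.Connected) (hT : 0 < T)
    (hb : StarBounded G l T) (i : ℕ) :
    {v | i ≤ G.dist r v ∧ (T : ℕ∞) < (G.neighborSet v ∩ layer G r i).encard}.encard < l := by
  obtain rfl | hi := Nat.eq_zero_or_pos i
  · have hempty : {v | 0 ≤ G.dist r v ∧
        (T : ℕ∞) < (G.neighborSet v ∩ layer G r 0).encard} = ∅ := by
      refine Set.eq_empty_of_forall_notMem fun v ⟨_, hv⟩ => hv.not_ge ?_
      calc (G.neighborSet v ∩ layer G r 0).encard ≤ (layer G r 0).encard :=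
            Set.encard_le_encard Set.inter_subset_right
        _ ≤ 1 := encard_layer_zero_le hG r
        _ ≤ T := by exact_mod_cast hT
    have := hG.nonempty
    rw [hempty, Set.encard_empty]
    exact_mod_cast hb.pos
  · have hA : (G.induce {v | G.dist r v < i}).Connected :=
      connected_induce_of_dist hG hi (fun _ h => h) fun _ h => h.le
    refine (Set.encard_le_encard ?_).trans_lt (hb _ hA)
    rintro v ⟨hv, hvT⟩
    refine ⟨not_lt.2 hv, hvT.le.trans (Set.encard_le_encard ?_)⟩
    rintro z ⟨hvz, rfl⟩
    obtain ⟨p, hpz, hp⟩ := exists_adj_dist_succ_eq hG (v := z) (r := r) (by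
      rintro rfl
      simp at hi)
    exact ⟨hvz, fun h : G.dist r z < G.dist r z => lt_irrefl _ h, p, Nat.lt_of_succ_le hp.le, hpz⟩

lemma encard_many_common_lt (hb : StarBounded G l T) (x : V) :
    {v | v ≠ x ∧ (T : ℕ∞) ≤ (G.commonNeighbors v x).encard}.encard < l := by
  refine (Set.encard_le_encard ?_).trans_lt (hb {x} (by simp))
  rintro v ⟨hvx, hv⟩
  refine ⟨hvx, hv.trans (Set.encard_le_encard ?_)⟩
  rintro z ⟨hvz, hxz⟩
  exact ⟨hvz, hxz.ne', x, rfl, hxz⟩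

/-- Such a later vertex `x` has many neighbours in layer `i + 1`, so there are fewer than `l`
candidates for `x`. -/
lemma encard_many_common_later_le (hG : G.Connected) (hT : 0 < T)
    (hb : StarBounded G l T) (i : ℕ) :
    {v ∈ layer G r i | ∃ x, i < G.dist r x ∧
      (T : ℕ∞) < (G.commonNeighbors v x ∩ layer G r (i + 1)).encard}.encard ≤ (l * l : ℕ) := by
  let X : Set V :=
    {x | i + 1 ≤ G.dist r x ∧ (T : ℕ∞) < (G.neighborSet x ∩ layer G r (i + 1)).encard}
  have hX : X.encard ≤ l := (encard_many_in_layer_lt hG hT hb (i + 1)).le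
  calc _ ≤ (⋃ x ∈ X, {v | v ≠ x ∧ (T : ℕ∞) ≤ (G.commonNeighbors v x).encard}).encard := by
        refine Set.encard_le_encard ?_
        rintro v ⟨rfl, x, hvx, hT'⟩
        have hxX : x ∈ X := ⟨hvx, hT'.trans_le
          (Set.encard_le_encard (Set.inter_subset_inter_left _ Set.inter_subset_right))⟩
        refine Set.mem_biUnion hxX ⟨?_, hT'.le.trans (Set.encard_le_encard Set.inter_subset_left)⟩
        rintro rfl
        exact lt_irrefl _ hvx
    _ ≤ l * l := encard_biUnion_le_mul hX fun x _ => (encard_many_common_lt hb x).le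
    _ = (l * l : ℕ) := by push_cast; rfl

lemma encard_lt_of_forall_le_encard_boundary (hG : G.Connected) (hb : StarBounded G l T) {i : ℕ}
    (hi : 0 < i) {W : Set V} (hW : W ⊆ layer G r i)
    (hT : ∀ v ∈ W, (T : ℕ∞) ≤ (G.neighborSet v ∩
      (layer G r (i + 1) ∩ outerBoundary G (layer G r i \ W))).encard) : W.encard < l := by
  have hA : (G.induce ({v | G.dist r v ≤ i} \ W)).Connected :=
    connected_induce_of_dist hG hi (fun v hv => ⟨hv.le, fun hvW => hv.ne (hW hvW)⟩)
      fun v hv => hv.1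
  refine (Set.encard_le_encard ?_).trans_lt (hb _ hA)
  intro v hv
  refine ⟨fun h => h.2 hv, (hT v hv).trans (Set.encard_le_encard ?_)⟩
  rintro z ⟨hvz, hz, -, y, ⟨hy, hyW⟩, hyz⟩
  exact ⟨hvz, fun h => absurd (hz.symm.trans_le h.1) (Nat.not_succ_le_self i),
    y, ⟨le_of_eq hy, hyW⟩, hyz⟩

/-- Pigeonhole: the second neighbour of a shared child lies either outside `S` or among the at
most `2 * l` elements of `S`. -/
lemma many_boundary_or_exists_many_common {i : ℕ} {S : Finset V} (hS : S.card ≤ 2 * l) {v : V}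
    (hv : v ∈ layer G r i) (hvT : (((2 * l + 1) * T : ℕ) : ℕ∞) < (sharedChildren G r v).encard) :
    (T : ℕ∞) ≤ (G.neighborSet v ∩
        (layer G r (i + 1) ∩ outerBoundary G (layer G r i \ S))).encard ∨
      ∃ w ∈ S, w ≠ v ∧ (T : ℕ∞) ≤ (G.commonNeighbors v w ∩ layer G r (i + 1)).encard := by
  by_contra! h
  obtain ⟨hout, hin⟩ := h
  obtain rfl := hv
  refine hvT.not_ge ?_
  calc (sharedChildren G r v).encard
      ≤ ((⋃ w ∈ {w | w ∈ S ∧ w ≠ v}, G.commonNeighbors v w ∩ layer G r (G.dist r v + 1)) ∪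
        (G.neighborSet v ∩ (layer G r (G.dist r v + 1) ∩
          outerBoundary G (layer G r (G.dist r v) \ S)))).encard := by
        refine Set.encard_le_encard ?_
        rintro z ⟨hvz, hz, w, hw, hwv, hwz⟩
        by_cases hwS : w ∈ S
        · exact Or.inl (Set.mem_biUnion (show w ∈ S ∧ w ≠ v from ⟨hwS, hwv⟩) ⟨⟨hvz, hwz⟩, hz⟩)
        · refine Or.inr ⟨hvz, hz, fun h => ?_, w, ⟨hw, hwS⟩, hwz⟩
          exact Nat.succ_ne_self _ (hz.symm.trans h.1)
    _ ≤ (2 * l : ℕ) * T + T := by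
        refine (Set.encard_union_le _ _).trans (add_le_add ?_ hout.le)
        refine encard_biUnion_le_mul ?_ fun w hw => (hin w hw.1 hw.2).le
        calc Set.encard {w | w ∈ S ∧ w ≠ v} ≤ (S : Set V).encard :=
              Set.encard_le_encard fun w hw => hw.1
          _ ≤ (2 * l : ℕ) := by
              rw [Set.encard_coe_eq_coe_finsetCard]
              exact_mod_cast hS
    _ = ((2 * l + 1) * T : ℕ) := by push_cast; ring

lemma encard_many_shared_lt (hG : G.Connected) (hb : StarBounded G l T) {i : ℕ} (hi : 0 < i) :
    {v ∈ layer G r i | (((2 * l + 1) * T : ℕ) : ℕ∞) <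
      (sharedChildren G r v).encard}.encard < (2 * l : ℕ) := by
  by_contra! hlarge
  obtain ⟨S, hSsub, hScard⟩ := Set.exists_subset_encard_eq hlarge
  lift S to Finset V using Set.finite_of_encard_eq_coe hScard
  rw [Set.encard_coe_eq_coe_finsetCard, Nat.cast_inj] at hScard
  let P : V → Prop := fun v => (T : ℕ∞) ≤
    (G.neighborSet v ∩ (layer G r (i + 1) ∩ outerBoundary G (layer G r i \ S))).encard
  let F : SimpleGraph V := fromRel fun v w =>
    (T : ℕ∞) ≤ (G.commonNeighbors v w ∩ layer G r (i + 1)).encard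
  have hS : ∀ v ∈ S, P v ∨ ∃ w ∈ S, F.Adj v w := fun v hv =>
    (many_boundary_or_exists_many_common hScard.le (hSsub hv).1 (hSsub hv).2).imp_right
      fun ⟨w, hw, hwv, h⟩ => ⟨w, hw, hwv.symm, Or.inl h⟩
  obtain ⟨W, hWS, hWcard, hW⟩ := exists_half_dominated F P S hS
  have hWlayer : (W : Set V) ⊆ layer G r i := fun v hv => (hSsub (hWS hv)).1
  have hlt : (W : Set V).encard < l := by
    refine encard_lt_of_forall_le_encard_boundary hG hb hi hWlayer fun v hv => ?_
    obtain h | ⟨w, hwS, hwW, -, h⟩ := hW v hv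
    · refine h.trans (Set.encard_le_encard ?_)
      rintro z ⟨hvz, hz, -, y, hy, hyz⟩
      have hyW : y ∈ layer G r i \ W := ⟨hy.1, fun h => hy.2 (hWS h)⟩
      exact ⟨hvz, hz, fun h => Nat.succ_ne_self i (hz.symm.trans h.1), y, hyW, hyz⟩
    · simp only [commonNeighbors_symm G w v, or_self] at h
      refine h.trans (Set.encard_le_encard ?_)
      rintro z ⟨⟨hvz, hwz⟩, hz⟩
      exact ⟨hvz, hz, fun h => Nat.succ_ne_self i (hz.symm.trans h.1), w,
        ⟨(hSsub hwS).1, hwW⟩, hwz⟩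
  rw [Set.encard_coe_eq_coe_finsetCard, Nat.cast_lt] at hlt
  omega

lemma encard_not_isTame_le (hG : G.Connected) (hT : 0 < T) (hb : StarBounded G l T)
    (i : ℕ) : {v ∈ layer G r i | ¬ IsTame G r l T v}.encard ≤ (5 * l ^ 2 : ℕ) := by
  have := hG.nonempty
  have hl : 0 < l := hb.pos
  obtain rfl | hi := Nat.eq_zero_or_pos i
  · calc _ ≤ (layer G r 0).encard := Set.encard_le_encard fun v hv => hv.1
      _ ≤ 1 := encard_layer_zero_le hG r
      _ ≤ (5 * l ^ 2 : ℕ) := by exact_mod_cast Nat.mul_pos (by norm_num) (pow_pos hl 2)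
  · have hcover : {v ∈ layer G r i | ¬ IsTame G r l T v} ⊆
        {v | i ≤ G.dist r v ∧ (T : ℕ∞) < (G.neighborSet v ∩ layer G r i).encard} ∪
        {v | i - 1 ≤ G.dist r v ∧ (T : ℕ∞) < (G.neighborSet v ∩ layer G r (i - 1)).encard} ∪
        {v ∈ layer G r i | ∃ x, i < G.dist r x ∧
          (T : ℕ∞) < (G.commonNeighbors v x ∩ layer G r (i + 1)).encard} ∪
        {v ∈ layer G r i | (((2 * l + 1) * T : ℕ) : ℕ∞) < (sharedChildren G r v).encard} := by
      rintro v ⟨rfl, hv⟩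
      contrapose! hv
      simp only [Set.mem_union, Set.mem_ofPred_eq, not_or, not_and, not_exists, not_lt] at hv
      obtain ⟨⟨⟨hown, hprev⟩, hcommon⟩, hshared⟩ := hv
      exact ⟨hown le_rfl, hprev (Nat.sub_le _ _), hcommon rfl, hshared rfl⟩
    calc _ ≤ ((l : ℕ∞) + l + (l * l : ℕ)) + (2 * l : ℕ) := by
          refine (Set.encard_le_encard hcover).trans <|
            (Set.encard_union_le _ _).trans <| add_le_add ?_ (encard_many_shared_lt hG hb hi).le
          refine (Set.encard_union_le _ _).trans <|
            add_le_add ?_ (encard_many_common_later_le hG hT hb i)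
          exact (Set.encard_union_le _ _).trans <| add_le_add
            (encard_many_in_layer_lt hG hT hb i).le (encard_many_in_layer_lt hG hT hb (i - 1)).le
      _ ≤ (5 * l ^ 2 : ℕ) := by
          norm_cast
          nlinarith

end Distance

section Coloring

lemma exists_extension_ne_parent {V : Type u} {α : Type v} [Nontrivial α] (rank : V → ℕ)
    (par : V → V) (pre : V → Option α) :
    ∃ c : V → α, (∀ v a, pre v = some a → c v = a) ∧
      ∀ v, pre v = none → rank (par v) < rank v → c v ≠ c (par v) := by
  choose other hother using exists_ne (α := α)
  let step (v : V) (ih : ∀ u, rank u < rank v → α) : α :=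
    (pre v).getD (if h : rank (par v) < rank v then other (ih (par v) h) else Classical.arbitrary α)
  let c : V → α := (measure rank).wf.fix step
  have hc : ∀ v, c v = step v fun u _ => c u := (measure rank).wf.fix_eq step
  refine ⟨c, fun v a hv => ?_, fun v hv hlt => ?_⟩
  · rw [hc]
    simp only [step, hv, Option.getD_some]
  · rw [hc]
    simpa only [step, hv, Option.getD_none, dif_pos hlt] using hother (c (par v))

variable {V : Type u} {G : SimpleGraph V} {r : V} {B : Set V} {c : V → Fin 2}

/-- A colouring that gives `0` to `B`, `1` to the other neighbours of `B`, and to any further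
vertex except `r` a colour different from that of some neighbour closer to `r`. -/
structure IsLayeredColoring (G : SimpleGraph V) (r : V) (B : Set V) (c : V → Fin 2) : Prop where
  eq_zero : ∀ v ∈ B, c v = 0
  eq_one : ∀ v ∉ B, ∀ b ∈ B, G.Adj b v → c v = 1
  exists_parent_ne : ∀ v, v ∉ B → v ≠ r → (∀ b ∈ B, ¬ G.Adj b v) →
    ∃ p, G.Adj p v ∧ G.dist r p + 1 = G.dist r v ∧ c v ≠ c p

lemma exists_isLayeredColoring (hG : G.Connected) (r : V) (B : Set V) :
    ∃ c, IsLayeredColoring G r B c := by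
  classical
  have hparent : ∀ v, ∃ p, v ≠ r → G.Adj p v ∧ G.dist r p + 1 = G.dist r v := by
    intro v
    by_cases hv : v = r
    · exact ⟨v, fun h => (h hv).elim⟩
    · exact (exists_adj_dist_succ_eq hG hv).imp fun _ hp _ => hp
  choose par hpar using hparent
  obtain ⟨c, hpre, hne⟩ := exists_extension_ne_parent (α := Fin 2) (G.dist r) par fun v =>
    if v ∈ B then some 0 else if ∃ b ∈ B, G.Adj b v then some 1 else none
  refine ⟨c, fun v hv => hpre v 0 (if_pos hv), fun v hv b hb hbv => hpre v 1 ?_,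
    fun v hv hvr hB => ⟨par v, (hpar v hvr).1, (hpar v hvr).2, hne v ?_ ?_⟩⟩
  · rw [if_neg hv, if_pos ⟨b, hb, hbv⟩]
  · rw [if_neg hv, if_neg (by simpa using hB)]
  · exact Nat.lt_of_succ_le (hpar v hvr).2.le

lemma encard_neighborSet_inter_le {β : ℕ} (hB : ∀ i, (B ∩ layer G r i).encard ≤ β) (v : V) :
    (G.neighborSet v ∩ B).encard ≤ (3 * β : ℕ) := by
  calc (G.neighborSet v ∩ B).encard
      ≤ ((B ∩ layer G r (G.dist r v - 1)) ∪ (B ∩ layer G r (G.dist r v)) ∪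
        (B ∩ layer G r (G.dist r v + 1))).encard := by
        refine Set.encard_le_encard ?_
        rintro w ⟨hvw, hw⟩
        obtain h | h | h := Adj.diff_dist_adj (u := r) hvw
        exacts [Or.inl (Or.inr ⟨hw, h⟩), Or.inr ⟨hw, h⟩, Or.inl (Or.inl ⟨hw, h⟩)]
    _ ≤ β + β + β :=
        (Set.encard_union_le _ _).trans <| add_le_add
          ((Set.encard_union_le _ _).trans (add_le_add (hB _) (hB _))) (hB _)
    _ = (3 * β : ℕ) := by push_cast; ring

namespace IsLayeredColoring

lemma encard_sameColor_le_of_mem (hc : IsLayeredColoring G r B c) {β : ℕ}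
    (hB : ∀ i, (B ∩ layer G r i).encard ≤ β) {v : V} (hv : v ∈ B) :
    {w | G.Adj v w ∧ c w = c v}.encard ≤ (3 * β : ℕ) := by
  refine (Set.encard_le_encard ?_).trans (encard_neighborSet_inter_le hB v)
  rintro w ⟨hvw, hwv⟩
  refine ⟨hvw, of_not_not fun hw => ?_⟩
  rw [hc.eq_zero v hv, hc.eq_one w hw v hv hvw] at hwv
  exact one_ne_zero hwv

/-- If both alternatives fail, then `w` is coloured against its parent, which can only be `v`. -/
lemma mem_sharedChildren_or_exists_adj (hc : IsLayeredColoring G r B c) {v w : V}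
    (hvw : G.Adj v w) (hcol : c w = c v) (hw : w ∉ B) (hnext : G.dist r w = G.dist r v + 1) :
    w ∈ sharedChildren G r v ∨ ∃ b ∈ B ∩ (layer G r (G.dist r v + 1) ∪ layer G r (G.dist r v + 2)),
      G.Adj b w := by
  have hshared : ∀ p, G.dist r p = G.dist r v → p ≠ v → G.Adj p w → w ∈ sharedChildren G r v :=
    fun p hp hpv hpw => ⟨hvw, hnext, p, hp, hpv, hpw⟩
  by_cases hwB : ∃ b ∈ B, G.Adj b w
  · obtain ⟨b, hb, hbw⟩ := hwB
    have hbv : b ≠ v := by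
      rintro rfl
      rw [hc.eq_zero b hb, hc.eq_one w hw b hb hbw] at hcol
      exact one_ne_zero hcol
    obtain h | h | h := Adj.diff_dist_adj (u := r) hbw.symm
    · exact Or.inr ⟨b, ⟨hb, Or.inl (h.trans hnext)⟩, hbw⟩
    · exact Or.inr ⟨b, ⟨hb, Or.inr (h.trans (congrArg (· + 1) hnext))⟩, hbw⟩
    · exact Or.inl (hshared b (by omega) hbv hbw)
  · have hwr : w ≠ r := by
      rintro rfl
      simp at hnext
    obtain ⟨p, hpw, hp, hne⟩ := hc.exists_parent_ne w hw hwr (by simpa using hwB)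
    refine Or.inl (hshared p (by omega) ?_ hpw)
    rintro rfl
    exact hne hcol

variable {l T : ℕ}

lemma encard_sameColor_le_of_isTame (hc : IsLayeredColoring G r B c) {β : ℕ}
    (hB : ∀ i, (B ∩ layer G r i).encard ≤ β) {v : V} (hv : IsTame G r l T v) :
    {w | G.Adj v w ∧ c w = c v}.encard ≤
      (3 * β + T + T + (2 * l + 1) * T + 2 * β * T : ℕ) := by
  let L : Set V := B ∩ (layer G r (G.dist r v + 1) ∪ layer G r (G.dist r v + 2))
  let K : V → Set V := fun b => G.commonNeighbors v b ∩ layer G r (G.dist r v + 1)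
  have hcover : {w | G.Adj v w ∧ c w = c v} ⊆ (G.neighborSet v ∩ B) ∪
      (G.neighborSet v ∩ layer G r (G.dist r v)) ∪
      (G.neighborSet v ∩ layer G r (G.dist r v - 1)) ∪ sharedChildren G r v ∪ ⋃ b ∈ L, K b := by
    rintro w ⟨hvw, hcol⟩
    by_cases hw : w ∈ B
    · exact Or.inl (Or.inl (Or.inl (Or.inl ⟨hvw, hw⟩)))
    obtain h | h | h := Adj.diff_dist_adj (u := r) hvw
    · exact Or.inl (Or.inl (Or.inl (Or.inr ⟨hvw, h⟩)))
    · obtain hshared | ⟨b, hb, hbw⟩ := hc.mem_sharedChildren_or_exists_adj hvw hcol hw h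
      exacts [Or.inl (Or.inr hshared), Or.inr (Set.mem_biUnion hb ⟨⟨hvw, hbw⟩, h⟩)]
    · exact Or.inl (Or.inl (Or.inr ⟨hvw, h⟩))
  have hL : L.encard ≤ (2 * β : ℕ) := by
    calc L.encard ≤ β + β := by
          simp only [L, Set.inter_union_distrib_left]
          exact (Set.encard_union_le _ _).trans (add_le_add (hB _) (hB _))
      _ = (2 * β : ℕ) := by push_cast; ring
  have hK : ∀ b ∈ L, (K b).encard ≤ T := by
    rintro b ⟨-, hb | hb⟩ <;> exact hv.encard_common_le b (by rw [hb]; omega)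
  refine (Set.encard_le_encard hcover).trans ?_
  push_cast
  refine (Set.encard_union_le _ _).trans (add_le_add ?_ (by
    exact_mod_cast encard_biUnion_le_mul hL hK))
  refine (Set.encard_union_le _ _).trans (add_le_add ?_ (by exact_mod_cast hv.encard_shared_le))
  refine (Set.encard_union_le _ _).trans (add_le_add ?_ hv.encard_prev_le)
  refine (Set.encard_union_le _ _).trans (add_le_add ?_ hv.encard_own_le)
  exact_mod_cast encard_neighborSet_inter_le hB v

end IsLayeredColoring

end Coloring

section Defect

variable {V : Type u} {G : SimpleGraph V} {l T : ℕ}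

/-- The colouring `c` has defect at most `d`: every vertex has at most `d` neighbours of its own
colour. They are counted in `ℕ∞`, since `Set.ncard` is `0` on infinite sets. -/
def HasDefectLE {α : Type*} (G : SimpleGraph V) (c : V → α) (d : ℕ) : Prop :=
  ∀ v, {w | G.Adj v w ∧ c w = c v}.encard ≤ d

lemma HasDefectLE.defColorable {k d d' : ℕ} {c : V → Fin k} (hc : HasDefectLE G c d)
    (hd : d ≤ d') : DefColorable G k d' :=
  ⟨c, fun v => (Set.encard_le_coe_iff_finite_ncard_le.1 (hc v)).2.trans hd⟩

lemma exists_hasDefectLE_of_connected (hG : G.Connected) (hT : 0 < T) (hb : StarBounded G l T) :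
    ∃ c : V → Fin 2, HasDefectLE G c (30 * l ^ 2 * T) := by
  obtain ⟨r⟩ := hG.nonempty
  have : Nonempty V := ⟨r⟩
  have hl : 0 < l := hb.pos
  have hwild : ∀ i, ({v | ¬ IsTame G r l T v} ∩ layer G r i).encard ≤ (5 * l ^ 2 : ℕ) := by
    intro i
    rw [Set.inter_comm]
    exact encard_not_isTame_le hG hT hb i
  obtain ⟨c, hc⟩ := exists_isLayeredColoring hG r {v | ¬ IsTame G r l T v}
  refine ⟨c, fun v => ?_⟩
  have hll : l ≤ l ^ 2 := Nat.le_self_pow two_ne_zero l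
  have hl2 : l ^ 2 ≤ l ^ 2 * T := Nat.le_mul_of_pos_right _ hT
  by_cases hv : IsTame G r l T v
  · refine (hc.encard_sameColor_le_of_isTame hwild hv).trans (Nat.cast_le.2 ?_)
    have hlT : l * T ≤ l ^ 2 * T := Nat.mul_le_mul_right T hll
    have hT' : T ≤ l * T := Nat.le_mul_of_pos_left T hl
    linarith
  · refine (hc.encard_sameColor_le_of_mem hwild hv).trans (Nat.cast_le.2 ?_)
    linarith

lemma exists_hasDefectLE_of_components {α : Type*} {d : ℕ}
    (h : ∀ C : G.ConnectedComponent, ∃ c : C.supp → α, HasDefectLE C.toSimpleGraph c d) :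
    ∃ c : V → α, HasDefectLE G c d := by
  choose c hc using h
  have hcol_eq : ∀ C w (hw : w ∈ C.supp), c (G.connectedComponentMk w) ⟨w, rfl⟩ = c C ⟨w, hw⟩ := by
    rintro _ w rfl
    rfl
  refine ⟨fun v => c (G.connectedComponentMk v) ⟨v, rfl⟩, fun v => ?_⟩
  refine le_trans ?_ (hc (G.connectedComponentMk v) ⟨v, rfl⟩)
  rw [← Subtype.val_injective.encard_image]
  refine Set.encard_le_encard ?_
  rintro w ⟨hvw, hcol⟩
  have hw : w ∈ (G.connectedComponentMk v).supp :=
    (ConnectedComponent.connectedComponentMk_eq_of_adj hvw).symm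
  exact ⟨⟨w, hw⟩, ⟨hvw, (hcol_eq _ w hw).symm.trans hcol⟩, rfl⟩

end Defect

lemma defectBound_le_ceil {l k : ℕ} (hl : 1 ≤ l) (hk : 1 ≤ k) :
    30 * l ^ 3 * (k + 2) ≤ ⌈(90 : ℝ) * (l : ℝ) ^ 10 * (k : ℝ) ^ 3⌉₊ := by
  have hnat : 30 * l ^ 3 * (k + 2) ≤ 90 * l ^ 10 * k ^ 3 := by
    calc 30 * l ^ 3 * (k + 2) ≤ 30 * l ^ 10 * (3 * k ^ 3) := by
          gcongr 30 * ?_ * ?_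
          · exact Nat.pow_le_pow_right hl (by norm_num)
          · have := Nat.le_self_pow (n := 3) (by norm_num) k
            omega
      _ = 90 * l ^ 10 * k ^ 3 := by ring
  have hceil : ⌈(90 : ℝ) * (l : ℝ) ^ 10 * (k : ℝ) ^ 3⌉₊ = 90 * l ^ 10 * k ^ 3 := by
    exact_mod_cast Nat.ceil_natCast (R := ℝ) (90 * l ^ 10 * k ^ 3)
  exact hnat.trans hceil.ge

theorem stmt18_general {V : Type u} {G : SimpleGraph V} {l k : ℕ}
    (hG : ¬ IsMinor (Hlk l k) G) :
    ∃ c : V → Fin 2, HasDefectLE G c (30 * l ^ 3 * (k + 2)) := by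
  refine exists_hasDefectLE_of_components fun C => ?_
  have hC : StarBounded C.toSimpleGraph l (l * (k + 2)) :=
    starBounded_of_not_isMinor fun h => hG (h.map C.toSimpleGraph_hom Subtype.val_injective)
  have := C.connected_toSimpleGraph.nonempty
  have hT : 0 < l * (k + 2) := Nat.mul_pos hC.pos (Nat.succ_pos _)
  obtain ⟨c, hc⟩ := exists_hasDefectLE_of_connected C.connected_toSimpleGraph hT hC
  refine ⟨c, ?_⟩
  convert hc using 1
  ring

/-- There is an absolute constant `c` such that for all `ℓ ≥ 2` and `k ≥ 1`, every finite
simple graph with no `H_{ℓ,k}` minor is `(2, ⌈c ℓ¹⁰ k³⌉)`-colourable, where `H_{ℓ,k}` is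
obtained from `ℓ` disjoint copies of `K_{1,k}` by adding one dominant vertex. -/
theorem stmt18 :
    ∃ c : ℝ, ∀ (l k : ℕ), 2 ≤ l → 1 ≤ k →
      ∀ (V : Type) [Fintype V] (G : SimpleGraph V),
        ¬ IsMinor (Hlk l k) G →
        DefColorable G 2 ⌈c * (l : ℝ) ^ 10 * (k : ℝ) ^ 3⌉₊ := by
  refine ⟨90, fun l k hl hk V _ G hG => ?_⟩
  obtain ⟨c, hc⟩ := stmt18_general hG
  exact hc.defColorable (defectBound_le_ceil (one_le_two.trans hl) hk)
end

section
/- Let T be a tree with n ≥ 2 vertices and radius r ≥ 1. Then every finite simple graph containing no subgraph isomorphic to T is (r, n−2)-colourable. -/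
/-!
Put `H₀ = V(G)` and let `Hᵢ₊₁` be the set of vertices with at least `n - 1` neighbours in `Hᵢ`.

If `Hᵣ` is empty, every vertex `v` has an index `i < r` with `v ∈ Hᵢ` and `v ∉ Hᵢ₊₁`; colour `v`
by such an `i`. All neighbours of `v` with colour `i` lie in `Hᵢ`, so there are at most `n - 2` of
them.

If `Hᵣ` is nonempty, then `T`, rooted at a vertex of eccentricity at most `r`, embeds greedily in
`G` with the vertices at depth `d` placed in `H_{r-d}`. The vertices are added by increasing depth:
when a child of `p` is to be added, at most `n - 2` vertices other than the image of `p` are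
occupied, whereas that image has `n - 1` neighbours in the required set. The child has no other
neighbour among the vertices added so far, since in a tree the neighbour closer to the root is
unique.
-/

open SimpleGraph

universe u v

section Depth

variable {V : Type*} {G : SimpleGraph V} {u v : V}

lemma exists_adj_dist_eq_dist_add_one (huv : G.Reachable u v) (hne : v ≠ u) :
    ∃ w, G.Adj w v ∧ G.dist u v = G.dist u w + 1 := by
  obtain ⟨p, hp⟩ := huv.symm.exists_walk_length_eq_dist
  cases p with
  | nil => exact absurd rfl hne
  | @cons _ w _ hvw q =>
    have hle : G.dist u w ≤ q.length := dist_comm (G := G) ▸ dist_le q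
    rw [Walk.length_cons, dist_comm] at hp
    refine ⟨w, hvw.symm, ?_⟩
    rcases hvw.symm.diff_dist_adj (u := u) with h | h | h <;> omega

lemma eq_of_adj_of_dist_le_dist (hG : G.IsAcyclic) (huv : G.Reachable u v) {w w' : V}
    (hw : G.Adj w v) (hw' : G.Adj w' v) (hdist : G.dist u w ≤ G.dist u v)
    (hdist' : G.dist u w' ≤ G.dist u v) : w = w' := by
  obtain ⟨p, hp, -⟩ := huv.exists_path_of_dist
  have eq_penultimate : ∀ x, G.Adj x v → G.dist u x ≤ G.dist u v → x = p.penultimate := by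
    intro x hx hle
    have hux : G.Reachable u x := huv.trans hx.symm.reachable
    obtain ⟨q, hq, hq_len⟩ := hux.exists_path_of_dist
    have hv : v ∉ q.support := fun hv ↦ by
      have hlen : q.length = p.length + 1 :=
        hG.path_concat hp hq hx.symm hv ▸ p.length_concat hx.symm
      have hp_len : G.dist u v ≤ p.length := dist_le p
      omega
    exact hG.eq_penultimate_of_adj_end hp hx.symm
      (hG.mem_support_of_ne_mem_support_of_adj_of_isPath hp hq hx.symm hv)
  rw [eq_penultimate w hw hdist, eq_penultimate w' hw' hdist']

end Depth

section GreedyEmbedding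

variable {α V : Type*} {T : SimpleGraph α} {G : SimpleGraph V} {X : α → Set V} {s : Set α}
  {f g : α → V}

/-- On the vertex set `s`, the map `f` is an embedding of the subgraph of `T` induced by `s` into
`G` that sends every vertex `u` to its prescribed target set `X u`. The values of `f` off `s` are
irrelevant, so that a greedy construction can work with total maps throughout. -/
structure IsPartialEmbedding (T : SimpleGraph α) (G : SimpleGraph V) (X : α → Set V) (s : Set α)
    (f : α → V) : Prop where
  injOn : Set.InjOn f s
  map_adj : ∀ ⦃u⦄, u ∈ s → ∀ ⦃w⦄, w ∈ s → T.Adj u w → G.Adj (f u) (f w)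
  map_mem : ∀ ⦃u⦄, u ∈ s → f u ∈ X u

namespace IsPartialEmbedding

protected lemma empty (f : α → V) : IsPartialEmbedding T G X ∅ f where
  injOn := Set.injOn_empty f
  map_adj _ hu := hu.elim
  map_mem _ hu := hu.elim

protected lemma congr (hf : IsPartialEmbedding T G X s f) (hfg : Set.EqOn f g s) :
    IsPartialEmbedding T G X s g where
  injOn := hf.injOn.congr hfg
  map_adj _ hu _ hw huw := hfg hu ▸ hfg hw ▸ hf.map_adj hu hw huw
  map_mem _ hu := hfg hu ▸ hf.map_mem hu

protected lemma insert (hf : IsPartialEmbedding T G X s f) {x : α} (hxs : x ∉ s) (hx : f x ∉ f '' s)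
    (hX : f x ∈ X x) (hadj : ∀ u ∈ s, T.Adj u x → G.Adj (f u) (f x)) :
    IsPartialEmbedding T G X (insert x s) f where
  injOn := (Set.injOn_insert hxs).2 ⟨hf.injOn, hx⟩
  map_adj := by
    rintro u (rfl | hu) w (rfl | hw) huw
    · exact absurd huw T.irrefl
    · exact (hadj w hw huw.symm).symm
    · exact hadj u hu huw
    · exact hf.map_adj hu hw huw
  map_mem := by
    rintro u (rfl | hu)
    · exact hX
    · exact hf.map_mem hu

lemma exists_insert (hf : IsPartialEmbedding T G X s f) {x : α} (hxs : x ∉ s) {y : V}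
    (hy : y ∉ f '' s) (hyX : y ∈ X x) (hadj : ∀ u ∈ s, T.Adj u x → G.Adj (f u) y) :
    ∃ g, IsPartialEmbedding T G X (insert x s) g := by
  classical
  have hfg : Set.EqOn f (Function.update f x y) s := fun u hu ↦
    (Function.update_of_ne (ne_of_mem_of_not_mem hu hxs) y f).symm
  refine ⟨Function.update f x y, (hf.congr hfg).insert hxs ?_ ?_ fun u hu hux ↦ ?_⟩
  · rwa [Function.update_self, ← hfg.image_eq]
  · rwa [Function.update_self]
  · rw [Function.update_self, ← hfg hu]
    exact hadj u hu hux

lemma containsSubgraph (hf : IsPartialEmbedding T G X Set.univ f) : ContainsSubgraph G T :=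
  ⟨⟨f, fun huw ↦ hf.map_adj (Set.mem_univ _) (Set.mem_univ _) huw⟩,
    Set.injOn_univ.1 hf.injOn⟩

end IsPartialEmbedding

lemma exists_mem_neighborSet_inter_notMem_image {s : Finset α} {p : α} (hp : p ∈ s) {A : Set V}
    (hcard : (s.card : ℕ∞) ≤ (G.neighborSet (f p) ∩ A).encard) :
    ∃ y ∈ G.neighborSet (f p) ∩ A, y ∉ f '' s := by
  classical
  -- The image of `p` is not its own neighbour, so only the rest of `s` can block a choice.
  have hlt : (f '' (s.erase p : Finset α)).encard < (G.neighborSet (f p) ∩ A).encard :=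
    calc (f '' (s.erase p : Finset α)).encard
        ≤ ((s.erase p : Finset α) : Set α).encard := Set.encard_image_le _ _
      _ = ((s.erase p).card : ℕ∞) := Set.encard_coe_eq_coe_finsetCard _
      _ < (s.card : ℕ∞) := by exact_mod_cast Finset.card_erase_lt_of_mem hp
      _ ≤ _ := hcard
  obtain ⟨y, hy, hy_erase⟩ := Set.not_subset.1 fun hsub ↦ hlt.not_ge (Set.encard_le_encard hsub)
  refine ⟨y, hy, ?_⟩
  rintro ⟨u, hu, rfl⟩
  have hup : u ≠ p := fun h ↦ G.irrefl (h ▸ hy.1)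
  exact hy_erase ⟨u, Finset.mem_coe.2 (Finset.mem_erase.2 ⟨hup, hu⟩), rfl⟩

variable [Fintype α] {root : α}

lemma exists_isPartialEmbedding_insert (hT : T.IsTree) (hroot : (X root).Nonempty)
    (hX : ∀ p x, T.Adj p x → T.dist root x = T.dist root p + 1 → ∀ v ∈ X p,
      ((Fintype.card α - 1 : ℕ) : ℕ∞) ≤ (G.neighborSet v ∩ X x).encard)
    {s : Finset α} (hf : IsPartialEmbedding T G X s f) {x : α} (hxs : x ∉ s)
    (hlower : ∀ u, T.dist root u < T.dist root x → u ∈ s)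
    (hmax : ∀ u ∈ s, T.dist root u ≤ T.dist root x) :
    ∃ g, IsPartialEmbedding T G X (insert x (s : Set α)) g := by
  obtain rfl | hx := eq_or_ne x root
  · obtain ⟨y, hy⟩ := hroot
    have hs : ∀ u, u ∉ s := fun u hu ↦ by
      have hux : x = u := (hT.connected.dist_eq_zero_iff).1 (by simpa using hmax u hu)
      exact hxs (hux ▸ hu)
    exact hf.exists_insert hxs (fun ⟨u, hu, _⟩ ↦ hs u hu) hy fun u hu ↦ (hs u hu).elim
  · have hreach := hT.connected root x
    obtain ⟨p, hpx, hdist⟩ := exists_adj_dist_eq_dist_add_one hreach hx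
    have hps : p ∈ s := hlower p (by omega)
    have hcard : s.card ≤ Fintype.card α - 1 :=
      Nat.le_sub_one_of_lt (Finset.card_lt_univ_of_notMem hxs)
    obtain ⟨y, ⟨hpy, hyX⟩, hys⟩ := exists_mem_neighborSet_inter_notMem_image hps
      ((Nat.cast_le.2 hcard).trans (hX p x hpx hdist _ (hf.map_mem hps)))
    refine hf.exists_insert hxs hys hyX fun u hu hux ↦ ?_
    rwa [eq_of_adj_of_dist_le_dist hT.isAcyclic hreach hux hpx (hmax u hu) (by omega)]

lemma containsSubgraph_of_forall_le_encard (hT : T.IsTree) (hroot : (X root).Nonempty)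
    (hX : ∀ p x, T.Adj p x → T.dist root x = T.dist root p + 1 → ∀ v ∈ X p,
      ((Fintype.card α - 1 : ℕ) : ℕ∞) ≤ (G.neighborSet v ∩ X x).encard) :
    ContainsSubgraph G T := by
  classical
  suffices h : ∀ s : Finset α, (∀ x ∈ s, ∀ u, T.dist root u < T.dist root x → u ∈ s) →
      ∃ f, IsPartialEmbedding T G X s f by
    obtain ⟨f, hf⟩ := h Finset.univ fun _ _ u _ ↦ Finset.mem_univ u
    rw [Finset.coe_univ] at hf
    exact hf.containsSubgraph
  intro s
  induction s using Finset.induction_on_max_value (T.dist root) with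
  | empty =>
    obtain ⟨y, -⟩ := hroot
    exact fun _ ↦ ⟨fun _ ↦ y, Finset.coe_empty (α := α) ▸ IsPartialEmbedding.empty _⟩
  | insert x s hxs hmax ih =>
    intro hlower
    have hlower_s : ∀ w ∈ insert x s, ∀ u, T.dist root u < T.dist root w → u ∈ s := by
      intro w hw u huw
      have hwx : T.dist root w ≤ T.dist root x :=
        (Finset.mem_insert.1 hw).elim (fun h ↦ h ▸ le_rfl) (hmax w)
      exact Finset.mem_of_mem_insert_of_ne (hlower w hw u huw)
        fun h ↦ (huw.trans_le hwx).ne (h ▸ rfl)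
    obtain ⟨f, hf⟩ := ih fun w hw ↦ hlower_s w (Finset.mem_insert_of_mem hw)
    rw [Finset.coe_insert]
    exact exists_isPartialEmbedding_insert hT hroot hX hf hxs
      (hlower_s x (Finset.mem_insert_self x s)) hmax

end GreedyEmbedding

section RichSet

variable {V : Type*} {G : SimpleGraph V} {m : ℕ∞} {r : ℕ}

/-- The iterated sets of vertices of large degree: `richSet G m 0` is the whole vertex set, and
`richSet G m (i + 1)` consists of the vertices with at least `m` neighbours in `richSet G m i`.
Counting with `encard` keeps vertices of infinite degree rich. -/
def richSet (G : SimpleGraph V) (m : ℕ∞) : ℕ → Set V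
  | 0 => Set.univ
  | i + 1 => {v | m ≤ (G.neighborSet v ∩ richSet G m i).encard}

lemma exists_mem_richSet_notMem_richSet_succ {v : V} (hv : v ∉ richSet G m r) :
    ∃ i : Fin r, v ∈ richSet G m i ∧ v ∉ richSet G m (i + 1) := by
  induction r with
  | zero => exact absurd (Set.mem_univ v) hv
  | succ r ih =>
    by_cases hr : v ∈ richSet G m r
    · exact ⟨Fin.last r, hr, hv⟩
    · obtain ⟨i, hi⟩ := ih hr
      exact ⟨i.castSucc, hi⟩

lemma exists_coloring_encard_lt_of_richSet_eq_empty (h : richSet G m r = ∅) :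
    ∃ c : V → Fin r, ∀ v, {w | G.Adj v w ∧ c w = c v}.encard < m := by
  choose c hmem hnotMem using fun v ↦
    exists_mem_richSet_notMem_richSet_succ (h ▸ Set.notMem_empty v : v ∉ richSet G m r)
  refine ⟨c, fun v ↦ ?_⟩
  calc {w | G.Adj v w ∧ c w = c v}.encard
      ≤ (G.neighborSet v ∩ richSet G m (c v)).encard :=
        Set.encard_le_encard fun w ⟨hvw, hcw⟩ ↦ ⟨hvw, hcw ▸ hmem w⟩
    _ < m := not_le.1 (hnotMem v)

lemma containsSubgraph_of_richSet_nonempty {α : Type*} [Fintype α] {T : SimpleGraph α}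
    (hT : T.IsTree) {root : α} (hroot : ∀ u, T.dist root u ≤ r)
    (h : (richSet G (Fintype.card α - 1 : ℕ) r).Nonempty) : ContainsSubgraph G T := by
  refine containsSubgraph_of_forall_le_encard hT (root := root)
    (X := fun u ↦ richSet G (Fintype.card α - 1 : ℕ) (r - T.dist root u)) (by simpa using h) ?_
  intro p x _ hdist v hv
  have hx := hroot x
  have hsucc : r - T.dist root p = r - T.dist root x + 1 := by omega
  rw [hsucc] at hv
  exact hv

end RichSet

-- `encard` because `ncard` is `0` on an infinite set.
theorem stmt19_general {β V : Type*} [Fintype β] {T : SimpleGraph β} (hT : T.IsTree) {r : ℕ}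
    {root : β} (hroot : ∀ u, T.dist root u ≤ r) {G : SimpleGraph V}
    (h : ¬ ContainsSubgraph G T) :
    ∃ c : V → Fin r, ∀ v,
      {w | G.Adj v w ∧ c w = c v}.encard ≤ (Fintype.card β - 2 : ℕ) := by
  have hempty : richSet G (Fintype.card β - 1 : ℕ) r = ∅ :=
    Set.not_nonempty_iff_eq_empty.1 (mt (containsSubgraph_of_richSet_nonempty hT hroot) h)
  obtain ⟨c, hc⟩ := exists_coloring_encard_lt_of_richSet_eq_empty hempty
  have hcard : ((Fintype.card β - 1 : ℕ) : ℕ∞) ≤ (Fintype.card β - 2 : ℕ) + 1 := by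
    norm_cast
    omega
  exact ⟨c, fun v ↦ Order.le_of_lt_add_one ((hc v).trans_le hcard)⟩

/-- Let `T` be a tree with `n ≥ 2` vertices and radius `r ≥ 1`. Then every finite simple graph
containing no subgraph isomorphic to `T` is `(r, n-2)`-colourable. -/
theorem stmt19 {β : Type} [Fintype β] (T : SimpleGraph β) (hT : T.IsTree)
    (n r : ℕ) (hn : n = Fintype.card β) (hn2 : 2 ≤ n) (hr : 1 ≤ r)
    (hrad : ∃ v : β, (∀ u, T.dist v u ≤ r) ∧ ∀ w : β, ∃ u, r ≤ T.dist w u)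
    {V : Type} [Fintype V] (G : SimpleGraph V)
    (h : ¬ ContainsSubgraph G T) :
    DefColorable G r (n - 2) := by
  obtain ⟨root, hroot, -⟩ := hrad
  obtain ⟨c, hc⟩ := stmt19_general hT hroot h
  exact ⟨c, fun v ↦ hn ▸ (Set.encard_le_coe_iff_finite_ncard_le.1 (hc v)).2⟩
end
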